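/- arXiv:1011.3434 — 3 statements merged into one kernel-verified Lean document; each statement's English description precedes it below -/
import Mathlib

section
/- There is an absolute constant C such that for all α ∈ ℝ and all β > 0, |F(α, β)| ≤ C β^{−1/3}. -/
open MeasureTheory

/-- The Gaussian weight `Γ(x) = exp(−πx²)`. -/
noncomputable def gauss (x : ℝ) : ℝ := Real.exp (-Real.pi * x ^ 2)

/-- `F(α,β) = ∫_{−∞}^{∞} Γ(x) e(−βx³ − αx) dx`, where `e(x) = exp(2πix)`. -/
noncomputable def Fab (α β : ℝ) : ℂ :=
  ∫ x : ℝ, (gauss x : ℂ) * Complex.exp (2 * Real.pi * Complex.I * ((-β * x ^ 3 - α * x : ℝ) : ℂ))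

open Filter Topology

theorem integrable_comp_abs_of_integrableOn_Ioi {f : ℝ → ℝ}
    (hf : IntegrableOn f (Set.Ioi 0)) : Integrable fun x : ℝ => f |x| := by
  have hpos : IntegrableOn (fun x : ℝ => f |x|) (Set.Ioi 0) :=
    hf.congr_fun (fun x hx => by simp only [abs_of_pos (Set.mem_Ioi.1 hx)]) measurableSet_Ioi
  have hneg : IntegrableOn (fun x : ℝ => f |x|) (Set.Iic 0) := by
    rw [integrableOn_Iic_iff_integrableOn_Iio, ← neg_zero,
      ← (Measure.measurePreserving_neg (volume : Measure ℝ)).integrableOn_comp_preimage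
        (MeasurableEquiv.neg ℝ).measurableEmbedding]
    simpa [Function.comp_def] using hpos
  rw [← integrableOn_univ, ← Set.Iic_union_Ioi (a := (0 : ℝ))]
  exact hneg.union hpos

/-- A pointwise majorant for the error of one integration by parts in the damped cubic
oscillatory integral. -/
noncomputable def cubicMajorant (c a y : ℝ) : ℝ :=
  24 * Real.pi * y / (1 + (2 * Real.pi * (3 * y ^ 2 + a)) ^ 2) + c * y * Real.exp (-c * y ^ 2)

theorem cubicMajorant_nonneg {c : ℝ} (hc : 0 < c) (a : ℝ) {y : ℝ} (hy : 0 ≤ y) :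
    0 ≤ cubicMajorant c a y := by
  have := Real.pi_pos
  unfold cubicMajorant
  positivity

theorem tendsto_exp_neg_mul_sq {c : ℝ} (hc : 0 < c) {l : Filter ℝ}
    (hl : Tendsto (fun y : ℝ => y ^ 2) l atTop) :
    Tendsto (fun y : ℝ => Real.exp (-c * y ^ 2)) l (𝓝 0) :=
  Real.tendsto_exp_atBot.comp (hl.const_mul_atTop_of_neg (neg_lt_zero.2 hc))

theorem hasDerivAt_exp_neg_mul_sq (c y : ℝ) :
    HasDerivAt (fun y : ℝ => Real.exp (-c * y ^ 2)) (-(2 * c * y * Real.exp (-c * y ^ 2))) y := by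
  refine ((hasDerivAt_pow 2 y).const_mul (-c)).exp.congr_deriv ?_
  push_cast
  ring

theorem hasDerivAt_two_pi_mul_three_mul_sq_add (a y : ℝ) :
    HasDerivAt (fun y : ℝ => 2 * Real.pi * (3 * y ^ 2 + a)) (12 * Real.pi * y) y := by
  refine ((((hasDerivAt_pow 2 y).const_mul 3).add_const a).const_mul (2 * Real.pi)).congr_deriv ?_
  push_cast
  ring

theorem cubicMajorant_integrableOn_and_integral_le {c : ℝ} (hc : 0 < c) (a : ℝ) :
    IntegrableOn (cubicMajorant c a) (Set.Ioi 0) ∧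
      ∫ y in Set.Ioi 0, cubicMajorant c a y ≤ 2 * Real.pi + 1 / 2 := by
  set W : ℝ → ℝ := fun y =>
    2 * Real.arctan (2 * Real.pi * (3 * y ^ 2 + a)) - 1 / 2 * Real.exp (-c * y ^ 2) with hW
  have hderiv : ∀ y ∈ Set.Ici (0 : ℝ), HasDerivAt W (cubicMajorant c a y) y := by
    intro y _
    refine (((hasDerivAt_two_pi_mul_three_mul_sq_add a y).arctan.const_mul 2).sub
      ((hasDerivAt_exp_neg_mul_sq c y).const_mul (1 / 2))).congr_deriv ?_
    unfold cubicMajorant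
    ring
  have hnonneg : ∀ y ∈ Set.Ioi (0 : ℝ), 0 ≤ cubicMajorant c a y := fun y hy =>
    cubicMajorant_nonneg hc a (Set.mem_Ioi.1 hy).le
  have hsq : Tendsto (fun y : ℝ => y ^ 2) atTop atTop := tendsto_pow_atTop two_ne_zero
  have hlim : Tendsto W atTop (𝓝 Real.pi) := by
    have hphase : Tendsto (fun y : ℝ => 2 * Real.pi * (3 * y ^ 2 + a)) atTop atTop :=
      (tendsto_atTop_add_const_right _ a (hsq.const_mul_atTop (by norm_num))).const_mul_atTop
        (by positivity)
    have harctan := (Real.tendsto_arctan_atTop.mono_right nhdsWithin_le_nhds).comp hphase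
    have h := (harctan.const_mul 2).sub ((tendsto_exp_neg_mul_sq hc hsq).const_mul (1 / 2))
    rwa [mul_zero, sub_zero, mul_div_cancel₀ _ two_ne_zero] at h
  refine ⟨integrableOn_Ioi_deriv_of_nonneg' hderiv hnonneg hlim, ?_⟩
  rw [integral_Ioi_of_hasDerivAt_of_nonneg' hderiv hnonneg hlim]
  have := Real.neg_pi_div_two_lt_arctan (2 * Real.pi * (3 * 0 ^ 2 + a))
  simp only [hW]
  norm_num at this ⊢
  linarith

/-- The phase of the cubic oscillatory integral. -/
noncomputable def cubicPhase (a y : ℝ) : ℝ := -(2 * Real.pi * (y ^ 3 + a * y))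

/-- A correction whose derivative agrees with the damped cubic oscillation up to an error that
is integrable uniformly in the parameters. -/
noncomputable def cubicCorrector (c a y : ℝ) : ℂ :=
  ((Real.exp (-c * y ^ 2) * (-(2 * Real.pi * (3 * y ^ 2 + a)) /
    (1 + (2 * Real.pi * (3 * y ^ 2 + a)) ^ 2)) : ℝ) : ℂ) *
      (-Complex.I * Complex.exp (Complex.I * (cubicPhase a y : ℂ)))

/-- The derivative of `cubicCorrector`. -/
noncomputable def cubicCorrectorDeriv (c a y : ℝ) : ℂ :=
  ((Real.exp (-c * y ^ 2) * (1 - 1 / (1 + (2 * Real.pi * (3 * y ^ 2 + a)) ^ 2)) : ℝ) -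
    Complex.I * ((2 * c * y * Real.exp (-c * y ^ 2) * (2 * Real.pi * (3 * y ^ 2 + a) /
      (1 + (2 * Real.pi * (3 * y ^ 2 + a)) ^ 2)) +
      Real.exp (-c * y ^ 2) * (12 * Real.pi * y * ((2 * Real.pi * (3 * y ^ 2 + a)) ^ 2 - 1) /
        (1 + (2 * Real.pi * (3 * y ^ 2 + a)) ^ 2) ^ 2) : ℝ) : ℂ)) *
      Complex.exp (Complex.I * (cubicPhase a y : ℂ))

theorem hasDerivAt_cubicCorrector (c a y : ℝ) :
    HasDerivAt (cubicCorrector c a) (cubicCorrectorDeriv c a y) y := by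
  have hp := hasDerivAt_two_pi_mul_three_mul_sq_add a y
  have hphase : HasDerivAt (cubicPhase a) (-(2 * Real.pi * (3 * y ^ 2 + a))) y := by
    refine (((hasDerivAt_pow 3 y).add ((hasDerivAt_id y).const_mul a)).const_mul
      (2 * Real.pi)).neg.congr_deriv ?_
    push_cast
    ring
  have hne : 1 + (2 * Real.pi * (3 * y ^ 2 + a)) ^ 2 ≠ 0 := by positivity
  have hamp := (hasDerivAt_exp_neg_mul_sq c y).mul (hp.neg.div ((hp.pow 2).const_add 1) hne)
  have hexp := ((hphase.ofReal_comp.const_mul Complex.I).cexp).const_mul (-Complex.I)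
  refine (hamp.ofReal_comp.mul hexp).congr_deriv ?_
  have hneC : (1 + (2 * Real.pi * (3 * y ^ 2 + a)) ^ 2 : ℂ) ≠ 0 := by exact_mod_cast hne
  unfold cubicCorrectorDeriv
  simp only [Pi.mul_apply, Pi.neg_apply, Pi.pow_apply, Pi.div_apply, Nat.cast_ofNat]
  generalize Complex.exp (Complex.I * (cubicPhase a y : ℂ)) = E
  generalize Real.exp (-c * y ^ 2) = G
  push_cast
  generalize hP : (2 * Real.pi * (3 * y ^ 2 + a) : ℂ) = P at *
  field_simp
  linear_combination -(E * G * P ^ 2 * (1 + P ^ 2)) * Complex.I_sq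

theorem norm_sub_cubicCorrectorDeriv_le {c : ℝ} (hc : 0 < c) (a y : ℝ) :
    ‖(Real.exp (-c * y ^ 2) : ℂ) * Complex.exp (Complex.I * (cubicPhase a y : ℂ)) -
      cubicCorrectorDeriv c a y‖ ≤
      (Set.Icc (-1 : ℝ) 1).indicator 1 y + cubicMajorant c a |y| := by
  have hsplit : (Real.exp (-c * y ^ 2) : ℂ) * Complex.exp (Complex.I * (cubicPhase a y : ℂ)) -
      cubicCorrectorDeriv c a y =
      (((Real.exp (-c * y ^ 2) * (1 / (1 + (2 * Real.pi * (3 * y ^ 2 + a)) ^ 2)) : ℝ) : ℂ) +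
        Complex.I * (((2 * c * y * Real.exp (-c * y ^ 2) * (2 * Real.pi * (3 * y ^ 2 + a) /
          (1 + (2 * Real.pi * (3 * y ^ 2 + a)) ^ 2)) : ℝ) : ℂ) +
        ((Real.exp (-c * y ^ 2) * (12 * Real.pi * y *
          (((2 * Real.pi * (3 * y ^ 2 + a)) ^ 2 - 1) /
            (1 + (2 * Real.pi * (3 * y ^ 2 + a)) ^ 2) ^ 2)) : ℝ) : ℂ))) *
      Complex.exp (Complex.I * (cubicPhase a y : ℂ)) := by
    unfold cubicCorrectorDeriv
    push_cast
    ring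
  rw [hsplit, norm_mul, mul_comm Complex.I (cubicPhase a y : ℂ), Complex.norm_exp_ofReal_mul_I,
    mul_one]
  have hG1 : Real.exp (-c * y ^ 2) ≤ 1 := Real.exp_le_one_iff.2 (by nlinarith [sq_nonneg y])
  have hmaj : cubicMajorant c a |y| =
      24 * Real.pi * |y| / (1 + (2 * Real.pi * (3 * y ^ 2 + a)) ^ 2) +
        c * |y| * Real.exp (-c * y ^ 2) := by
    rw [cubicMajorant, sq_abs]
  rw [hmaj]
  have hG0 := Real.exp_pos (-c * y ^ 2)
  generalize Real.exp (-c * y ^ 2) = G at *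
  generalize 2 * Real.pi * (3 * y ^ 2 + a) = p
  have hD : 0 < 1 + p ^ 2 := by positivity
  have hmain : G * (1 / (1 + p ^ 2)) ≤
      (Set.Icc (-1 : ℝ) 1).indicator 1 y + 12 * Real.pi * |y| / (1 + p ^ 2) := by
    refine (mul_le_of_le_one_left (by positivity) hG1).trans ?_
    by_cases hy : y ∈ Set.Icc (-1 : ℝ) 1
    · rw [Set.indicator_of_mem hy, Pi.one_apply]
      have h1 : 1 / (1 + p ^ 2) ≤ 1 := (div_le_one hD).2 (by nlinarith [sq_nonneg p])
      have h2 : 0 ≤ 12 * Real.pi * |y| / (1 + p ^ 2) := by positivity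
      linarith
    · rw [Set.indicator_of_notMem hy, zero_add]
      have hy1 : 1 ≤ |y| := by
        by_contra! h
        exact hy (abs_le.1 h.le)
      gcongr
      nlinarith [Real.pi_gt_three]
  have hamp : |p / (1 + p ^ 2)| ≤ 1 / 2 := by
    rw [abs_div, abs_of_pos hD, div_le_iff₀ hD, ← sq_abs]
    nlinarith [sq_nonneg (|p| - 1)]
  have hquot : |(p ^ 2 - 1) / (1 + p ^ 2) ^ 2| ≤ 1 / (1 + p ^ 2) := by
    rw [abs_div, abs_of_pos (pow_pos hD 2), div_le_div_iff₀ (pow_pos hD 2) hD]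
    have : |p ^ 2 - 1| ≤ 1 + p ^ 2 := abs_le.2 ⟨by nlinarith [sq_nonneg p], by linarith⟩
    nlinarith
  have hweight : |2 * c * y * G * (p / (1 + p ^ 2))| ≤ c * |y| * G := by
    rw [abs_mul, abs_mul, abs_mul, abs_of_pos hG0, abs_of_pos (by positivity : 0 < 2 * c)]
    calc 2 * c * |y| * G * |p / (1 + p ^ 2)| ≤ 2 * c * |y| * G * (1 / 2) := by gcongr
      _ = c * |y| * G := by ring
  have hcurv : |G * (12 * Real.pi * y * ((p ^ 2 - 1) / (1 + p ^ 2) ^ 2))| ≤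
      12 * Real.pi * |y| / (1 + p ^ 2) := by
    rw [abs_mul, abs_mul, abs_mul, abs_of_pos hG0, abs_of_pos (by positivity : 0 < 12 * Real.pi)]
    calc G * (12 * Real.pi * |y| * |(p ^ 2 - 1) / (1 + p ^ 2) ^ 2|)
        ≤ 1 * (12 * Real.pi * |y| * (1 / (1 + p ^ 2))) := by gcongr
      _ = 12 * Real.pi * |y| / (1 + p ^ 2) := by ring
  refine (norm_add_le _ _).trans ?_
  rw [norm_mul, Complex.norm_I, one_mul, Complex.norm_real, Real.norm_of_nonneg (by positivity)]
  have hsum := norm_add_le ((2 * c * y * G * (p / (1 + p ^ 2)) : ℝ) : ℂ)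
    ((G * (12 * Real.pi * y * ((p ^ 2 - 1) / (1 + p ^ 2) ^ 2)) : ℝ) : ℂ)
  rw [Complex.norm_real, Complex.norm_real, Real.norm_eq_abs, Real.norm_eq_abs] at hsum
  have hdouble : 24 * Real.pi * |y| / (1 + p ^ 2) = 2 * (12 * Real.pi * |y| / (1 + p ^ 2)) := by
    ring
  rw [hdouble]
  linarith

theorem norm_integral_exp_mul_cubicPhase_le {c : ℝ} (hc : 0 < c) (a : ℝ) :
    ‖∫ y : ℝ, (Real.exp (-c * y ^ 2) : ℂ) * Complex.exp (Complex.I * (cubicPhase a y : ℂ))‖ ≤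
      4 * Real.pi + 3 := by
  set f : ℝ → ℂ := fun y =>
    (Real.exp (-c * y ^ 2) : ℂ) * Complex.exp (Complex.I * (cubicPhase a y : ℂ)) with hf
  have hnormE : ∀ y : ℝ, ‖Complex.exp (Complex.I * (cubicPhase a y : ℂ))‖ = 1 := fun y => by
    rw [mul_comm, Complex.norm_exp_ofReal_mul_I]
  have hfnorm : ∀ y, ‖f y‖ = Real.exp (-c * y ^ 2) := fun y => by
    rw [hf, norm_mul, hnormE, mul_one, Complex.norm_real, Real.norm_of_nonneg (Real.exp_pos _).le]
  have hfcont : Continuous f := by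
    unfold f cubicPhase
    fun_prop
  have hfint : Integrable f :=
    (integrable_exp_neg_mul_sq hc).mono' hfcont.aestronglyMeasurable
      (Eventually.of_forall fun y => (hfnorm y).le)
  have hderivcont : Continuous (cubicCorrectorDeriv c a) := by
    unfold cubicCorrectorDeriv cubicPhase
    have hne : ∀ y : ℝ, 1 + (2 * Real.pi * (3 * y ^ 2 + a)) ^ 2 ≠ 0 := fun y => by positivity
    fun_prop (disch := simp [hne])
  obtain ⟨hmaj, hmajle⟩ := cubicMajorant_integrableOn_and_integral_le hc a
  have hind : Integrable ((Set.Icc (-1 : ℝ) 1).indicator (1 : ℝ → ℝ)) :=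
    (integrable_indicator_iff measurableSet_Icc).2 (by simp [Pi.one_def])
  have hbound := hind.add (integrable_comp_abs_of_integrableOn_Ioi hmaj)
  have herr : Integrable fun y => f y - cubicCorrectorDeriv c a y :=
    hbound.mono' (hfcont.sub hderivcont).aestronglyMeasurable
      (Eventually.of_forall fun y => norm_sub_cubicCorrectorDeriv_le hc a y)
  have hderivint : Integrable (cubicCorrectorDeriv c a) := by
    simpa [Pi.sub_def] using hfint.sub herr
  have hlim : ∀ {l : Filter ℝ}, Tendsto (fun y : ℝ => y ^ 2) l atTop →
      Tendsto (cubicCorrector c a) l (𝓝 0) := fun hl => by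
    refine squeeze_zero_norm (fun y => ?_) (tendsto_exp_neg_mul_sq hc hl)
    unfold cubicCorrector
    rw [norm_mul, norm_mul, hnormE, norm_neg, Complex.norm_I, mul_one, mul_one, Complex.norm_real,
      norm_mul, Real.norm_of_nonneg (Real.exp_pos _).le]
    refine mul_le_of_le_one_right (Real.exp_pos _).le ?_
    rw [Real.norm_eq_abs, abs_div, abs_neg, abs_of_pos (a := 1 + _) (by positivity),
      div_le_one (by positivity), ← sq_abs (2 * Real.pi * _)]
    nlinarith [sq_nonneg (|2 * Real.pi * (3 * y ^ 2 + a)| - 1)]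
  have hsq : Tendsto (fun y : ℝ => y ^ 2) atTop atTop := tendsto_pow_atTop two_ne_zero
  have hsq' : Tendsto (fun y : ℝ => y ^ 2) atBot atTop := by
    simpa [Function.comp_def] using hsq.comp tendsto_neg_atBot_atTop
  have hzero : ∫ y, cubicCorrectorDeriv c a y = 0 := by
    rw [integral_of_hasDerivAt_of_tendsto (hasDerivAt_cubicCorrector c a) hderivint (hlim hsq')
      (hlim hsq), sub_zero]
  calc ‖∫ y, f y‖ = ‖∫ y, (f y - cubicCorrectorDeriv c a y)‖ := by
        rw [integral_sub hfint hderivint, hzero, sub_zero]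
    _ ≤ ∫ y, ((Set.Icc (-1 : ℝ) 1).indicator 1 y + cubicMajorant c a |y|) :=
        norm_integral_le_of_norm_le hbound
          (Eventually.of_forall fun y => norm_sub_cubicCorrectorDeriv_le hc a y)
    _ = 2 + 2 * ∫ y in Set.Ioi 0, cubicMajorant c a y := by
        rw [integral_add hind (integrable_comp_abs_of_integrableOn_Ioi hmaj), integral_comp_abs,
          integral_indicator_one measurableSet_Icc]
        norm_num
    _ ≤ 4 * Real.pi + 3 := by linarith

theorem Fab_eq_smul_integral (α : ℝ) {b : ℝ} (hb : 0 < b) :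
    Fab α (b ^ 3) = |b⁻¹| • ∫ y : ℝ, (Real.exp (-(Real.pi / b ^ 2) * y ^ 2) : ℂ) *
      Complex.exp (Complex.I * (cubicPhase (α / b) y : ℂ)) := by
  rw [← Measure.integral_comp_mul_left]
  unfold Fab gauss cubicPhase
  congr 1
  ext x
  have hb' : (b : ℂ) ≠ 0 := by exact_mod_cast hb.ne'
  congr 2
  · rw [mul_pow, ← mul_assoc, neg_mul, neg_mul (Real.pi / b ^ 2),
      div_mul_cancel₀ _ (pow_ne_zero 2 hb.ne'), neg_mul]
  · push_cast
    field_simp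
    ring

theorem stmt6 :
    ∃ C : ℝ, ∀ α β : ℝ, 0 < β → ‖Fab α β‖ ≤ C * β ^ (-(1 : ℝ)/3) := by
  refine ⟨4 * Real.pi + 3, fun α β hβ => ?_⟩
  have hb : 0 < β ^ (1 / 3 : ℝ) := Real.rpow_pos_of_pos hβ _
  have hcube : (β ^ (1 / 3 : ℝ)) ^ 3 = β := by
    rw [← Real.rpow_natCast, ← Real.rpow_mul hβ.le]
    norm_num
  have hinv : β ^ (-(1 : ℝ) / 3) = (β ^ (1 / 3 : ℝ))⁻¹ := by
    rw [neg_div, Real.rpow_neg hβ.le]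
  have hscale := Fab_eq_smul_integral α hb
  rw [hcube] at hscale
  rw [hscale, hinv, norm_smul, Real.norm_eq_abs, abs_abs, abs_of_pos (inv_pos.2 hb), mul_comm]
  exact mul_le_mul_of_nonneg_right
    (norm_integral_exp_mul_cubicPhase_le (div_pos Real.pi_pos (pow_pos hb 2)) _) (inv_pos.2 hb).le
end

section
/- There is an absolute constant C such that for all α < 0 and all β > 0, | F(α, β) − (2^{1/2} exp(−π|α|/(3β)) / (3|α|β)^{1/4}) · cos( 2π( 1/8 − 2|α|^{3/2} / (3^{3/2} β^{1/2}) ) ) | ≤ C/|α|. -/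
open MeasureTheory

theorem norm_integral_mul_deriv_le_of_antitone {q : ℝ → ℝ} (hq : Antitone q) (hq0 : ∀ t, 0 ≤ q t)
    {φ φ' : ℝ → ℂ} {a b B : ℝ} (hab : a ≤ b) (hφ : ∀ t, HasDerivAt φ (φ' t) t)
    (hc : Continuous φ') (hB : ∀ t, ‖φ t‖ ≤ B) :
    ‖∫ t in a..b, (q t : ℂ) * φ' t‖ ≤ 2 * q a * B := by
  have hB0 : 0 ≤ B := (norm_nonneg _).trans (hB 0)
  have key : ∀ τ, ‖∫ t in a..τ, φ' t‖ ≤ 2 * B := fun τ => by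
    rw [intervalIntegral.integral_eq_sub_of_hasDerivAt (fun t _ => hφ t) (hc.intervalIntegrable _ _)]
    exact (norm_sub_le _ _).trans (by linarith [hB τ, hB a])
  have hmeas : MeasurableSet {p : ℝ × ℝ | p.2 < q p.1} :=
    measurableSet_lt measurable_snd (hq.measurable.comp measurable_fst)
  have hlevel : ∀ y, ‖∫ t in Set.Ioc a b, (if y < q t then φ' t else 0)‖ ≤ 2 * B := by
    intro y
    have hT : MeasurableSet {t | y < q t} := measurableSet_lt measurable_const hq.measurable
    have : ∫ t in Set.Ioc a b, (if y < q t then φ' t else 0)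
        = ∫ t in Set.Ioc a b ∩ {t | y < q t}, φ' t := by
      rw [← setIntegral_indicator hT]; rfl
    rw [this]
    set S := Set.Ioc a b ∩ {t | y < q t} with hS
    rcases S.eq_empty_or_nonempty with h | ⟨t₀, ht₀⟩
    · rw [h]; simpa using hB0
    · have hbdd : BddAbove S := ⟨b, fun t ht => ht.1.2⟩
      have h1 : S ⊆ Set.Ioc a (sSup S) := fun t ht => ⟨ht.1.1, le_csSup hbdd ht⟩
      have h2 : Set.Ioo a (sSup S) ⊆ S := by
        rintro t ⟨hat, htS⟩
        obtain ⟨u, hu, htu⟩ := exists_lt_of_lt_csSup ⟨t₀, ht₀⟩ htS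
        exact ⟨⟨hat, htu.le.trans hu.1.2⟩, lt_of_lt_of_le hu.2 (hq htu.le)⟩
      have h3 : S =ᵐ[volume] Set.Ioc a (sSup S) :=
        Filter.EventuallyLE.antisymm h1.eventuallyLE
          (Ioo_ae_eq_Ioc.symm.le.trans h2.eventuallyLE)
      rw [setIntegral_congr_set h3, ← intervalIntegral.integral_of_le
        (ht₀.1.1.le.trans (le_csSup hbdd ht₀))]
      exact key _
  have hrep : ∀ t ∈ Set.Ioc a b, (q t : ℂ) * φ' t
      = ∫ y in Set.Ioc 0 (q a), (if y < q t then φ' t else 0) := by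
    intro t ht
    have : ∀ y, (if y < q t then φ' t else 0) = (Set.Iio (q t)).indicator (fun _ => φ' t) y :=
      fun y => rfl
    simp_rw [this]
    rw [setIntegral_indicator measurableSet_Iio, setIntegral_const]
    have : Set.Ioc 0 (q a) ∩ Set.Iio (q t) = Set.Ioo 0 (q t) := by
      ext y
      simp only [Set.mem_inter_iff, Set.mem_Ioc, Set.mem_Iio, Set.mem_Ioo]
      exact ⟨fun h => ⟨h.1.1, h.2⟩, fun h => ⟨⟨h.1, h.2.le.trans (hq ht.1.le)⟩, h.2⟩⟩
    rw [this]
    simp [Measure.real, hq0 t]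
  rw [intervalIntegral.integral_of_le hab, setIntegral_congr_fun measurableSet_Ioc hrep,
    integral_integral_swap]
  · have := norm_setIntegral_le_of_norm_le_const (μ := volume) (s := Set.Ioc 0 (q a))
      (by simp) (fun y _ => hlevel y)
    refine this.trans_eq ?_
    simp [Measure.real, hq0 a]; ring
  · have hint : Integrable (fun p : ℝ × ℝ => φ' p.1)
        ((volume.restrict (Set.Ioc a b)).prod (volume.restrict (Set.Ioc 0 (q a)))) :=
      ((hc.integrableOn_Icc (a := a) (b := b)).mono_set Set.Ioc_subset_Icc_self).comp_fst _
    exact hint.indicator hmeas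

theorem norm_integral_antitone_mul_oscillatory_le {q : ℝ → ℝ} (hq : Antitone q)
    (hq0 : ∀ t, 0 ≤ q t) {θ θ' : ℝ → ℝ} {a b l : ℝ} (hab : a ≤ b) (hl : 0 < l)
    (hθ : ∀ t, HasDerivAt θ (θ' t) t) (hc : Continuous θ') :
    ‖∫ t in a..b, ((q t * θ' t : ℝ) : ℂ) * Complex.exp (2 * Real.pi * l * θ t * Complex.I)‖
      ≤ q a / (Real.pi * l) := by
  have hθc : Continuous θ := continuous_iff_continuousAt.2 fun t => (hθ t).continuousAt
  have hpi := Real.pi_pos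
  have hne : (2 * Real.pi * l * Complex.I : ℂ) ≠ 0 := by
    simp [hpi.ne', hl.ne']
  have := norm_integral_mul_deriv_le_of_antitone hq hq0 (a := a) (b := b)
    (B := 1 / (2 * Real.pi * l))
    (φ := fun t => Complex.exp (2 * Real.pi * l * θ t * Complex.I) / (2 * Real.pi * l * Complex.I))
    (φ' := fun t => θ' t * Complex.exp (2 * Real.pi * l * θ t * Complex.I)) hab ?_ (by fun_prop) ?_
  · convert this using 3
    · ext t; push_cast; ring
    · field_simp
  · intro t
    have h := ((((hθ t).ofReal_comp).const_mul (2 * Real.pi * l : ℂ)).mul_const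
      Complex.I).cexp.div_const (2 * Real.pi * l * Complex.I)
    refine h.congr_deriv ?_
    rw [div_eq_iff hne]
    ring
  · intro t
    rw [norm_div, show (2 * Real.pi * l * θ t * Complex.I : ℂ)
      = ((2 * Real.pi * l * θ t : ℝ) : ℂ) * Complex.I by push_cast; rfl,
      Complex.norm_exp_ofReal_mul_I]
    simp [abs_of_pos hpi, abs_of_pos hl]

theorem norm_integral_gaussian_oscillatory_le {e l V W : ℝ} (he : 0 ≤ e) (hl : 0 < l)
    (hV : 0 < V) (hVW : V ≤ W) :
    ‖∫ w in V..W, Complex.exp (-(e + 2 * Real.pi * l * Complex.I) * (w : ℂ) ^ 2)‖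
      ≤ 1 / (2 * V) / (Real.pi * l) := by
  have hpi := Real.pi_pos
  set q : ℝ → ℝ := fun w => Real.exp (-e * max w V ^ 2) * (1 / (2 * max w V)) with hqdef
  have hpos : ∀ w, 0 < max w V := fun w => hV.trans_le (le_max_right _ _)
  have hq : Antitone q := by
    intro x y hxy
    have h : max x V ≤ max y V := max_le_max_right V hxy
    have hx := hpos x
    have h2 : max x V ^ 2 ≤ max y V ^ 2 := by gcongr
    have h3 : -e * max y V ^ 2 ≤ -e * max x V ^ 2 := by nlinarith
    simp only [hqdef]
    gcongr
  have hq0 : ∀ t, 0 ≤ q t := fun t => by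
    have := hpos t
    positivity
  have h := norm_integral_antitone_mul_oscillatory_le hq hq0 (θ := fun w => -w ^ 2)
    (θ' := fun w => -(2 * w)) hVW hl (fun t => by simpa using (hasDerivAt_pow 2 t).fun_neg)
    (by fun_prop)
  have heq : ∫ w in V..W, ((q w * -(2 * w) : ℝ) : ℂ)
      * Complex.exp (2 * Real.pi * l * ((-w ^ 2 : ℝ) : ℂ) * Complex.I)
      = -∫ w in V..W, Complex.exp (-(e + 2 * Real.pi * l * Complex.I) * (w : ℂ) ^ 2) := by
    rw [← intervalIntegral.integral_neg]
    refine intervalIntegral.integral_congr fun w hw => ?_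
    rw [Set.uIcc_of_le hVW] at hw
    have hw0 : 0 < w := hV.trans_le hw.1
    have : q w * -(2 * w) = -Real.exp (-e * w ^ 2) := by
      simp only [hqdef, max_eq_left hw.1]
      field_simp
    simp only [this]
    push_cast
    rw [neg_mul, ← Complex.exp_add]
    congr 2
    ring
  rw [heq, norm_neg] at h
  refine h.trans ?_
  have : q V ≤ 1 / (2 * V) := by
    simp only [hqdef, max_self]
    refine mul_le_of_le_one_left (by positivity) (Real.exp_le_one_iff.2 ?_)
    nlinarith [sq_nonneg V]
  gcongr

theorem norm_fresnel_sub_le {l V : ℝ} (hl : 0 < l) (hV : 0 < V) :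
    ‖(∫ w in (0 : ℝ)..V, Complex.exp (-(2 * Real.pi * l * Complex.I) * (w : ℂ) ^ 2))
      - (Real.pi / (2 * Real.pi * l * Complex.I)) ^ (1 / 2 : ℂ) / 2‖
      ≤ 1 / (2 * V) / (Real.pi * l) := by
  have hpi := Real.pi_pos
  have hdamped : ∀ e : ℝ, 0 < e →
      ‖(∫ w in (0 : ℝ)..V, Complex.exp (-(e + 2 * Real.pi * l * Complex.I) * (w : ℂ) ^ 2))
        - (Real.pi / (e + 2 * Real.pi * l * Complex.I)) ^ (1 / 2 : ℂ) / 2‖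
        ≤ 1 / (2 * V) / (Real.pi * l) := by
    intro e he
    have hre : 0 < (e + 2 * Real.pi * l * Complex.I : ℂ).re := by simpa using he
    have hlim := intervalIntegral_tendsto_integral_Ioi 0
      (integrable_cexp_neg_mul_sq hre).integrableOn Filter.tendsto_id
    rw [integral_gaussian_complex_Ioi hre] at hlim
    refine le_of_tendsto ((tendsto_const_nhds.sub hlim).norm) ?_
    filter_upwards [Filter.eventually_ge_atTop V] with W hW
    have hc : Continuous fun w : ℝ =>
      Complex.exp (-(e + 2 * Real.pi * l * Complex.I) * (w : ℂ) ^ 2) := by fun_prop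
    rw [norm_sub_rev, id, intervalIntegral.integral_interval_sub_left
      (hc.intervalIntegrable _ _) (hc.intervalIntegrable _ _)]
    exact norm_integral_gaussian_oscillatory_le he.le hl hV hW
  have hcont : ContinuousAt (fun e : ℝ =>
      ‖(∫ w in (0 : ℝ)..V, Complex.exp (-(e + 2 * Real.pi * l * Complex.I) * (w : ℂ) ^ 2))
        - (Real.pi / (e + 2 * Real.pi * l * Complex.I)) ^ (1 / 2 : ℂ) / 2‖) 0 := by
    have h1 : Continuous fun e : ℝ =>
        ∫ w in (0 : ℝ)..V, Complex.exp (-(e + 2 * Real.pi * l * Complex.I) * (w : ℂ) ^ 2) :=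
      intervalIntegral.continuous_parametric_intervalIntegral_of_continuous' (by fun_prop) _ _
    have h2 : ContinuousAt (fun e : ℝ => (Real.pi : ℂ) / (e + 2 * Real.pi * l * Complex.I)) 0 := by
      refine ContinuousAt.div (by fun_prop) (by fun_prop) ?_
      simp [hpi.ne', hl.ne']
    refine (h1.continuousAt.sub ((h2.cpow continuousAt_const ?_).div_const 2)).norm
    right
    have : (Real.pi / (((0 : ℝ) : ℂ) + 2 * Real.pi * l * Complex.I) : ℂ)
        = ((-(1 / (2 * l)) : ℝ) : ℂ) * Complex.I := by
      have : (Real.pi : ℂ) ≠ 0 := by simp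
      have : (l : ℂ) ≠ 0 := by simp [hl.ne']
      push_cast
      rw [zero_add, div_eq_iff (by simp [hpi.ne', hl.ne'])]
      field_simp
      simp
    rw [this]
    simp [hl.ne']
  have hlim := (hcont.mono_left (nhdsWithin_le_nhds (s := Set.Ioi 0)))
  have := le_of_tendsto hlim (by
    filter_upwards [self_mem_nhdsWithin] with e he using hdamped e he)
  simpa using this

theorem exists_antitone_mul_eq_exp_sub {c : ℝ} (hc : 0 ≤ c) :
    ∃ q : ℝ → ℝ, Antitone q ∧ (∀ t, 0 ≤ q t) ∧ q 0 ≤ 1 ∧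
      ∀ t, 0 ≤ t → q t * (1 - t ^ 2) = Real.exp (-c * t ^ 2) - Real.exp (-c) := by
  set q : ℝ → ℝ := fun t =>
    ∫ θ in (0 : ℝ)..1, c * Real.exp (-c * (1 + θ * (max t 0 ^ 2 - 1))) with hqdef
  have hid : ∀ t, 0 ≤ t → q t * (1 - t ^ 2) = Real.exp (-c * t ^ 2) - Real.exp (-c) := by
    intro t ht
    have hd : ∀ θ : ℝ, HasDerivAt (fun θ => Real.exp (-c * (1 + θ * (t ^ 2 - 1))))
        (c * Real.exp (-c * (1 + θ * (t ^ 2 - 1))) * (1 - t ^ 2)) θ := fun θ => by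
      have := ((((hasDerivAt_id θ).mul_const (t ^ 2 - 1)).const_add 1).const_mul (-c)).exp
      refine this.congr_deriv ?_
      simp only [id]
      ring
    simp only [hqdef, max_eq_left ht]
    rw [← intervalIntegral.integral_mul_const, intervalIntegral.integral_eq_sub_of_hasDerivAt
      (fun θ _ => hd θ) (Continuous.intervalIntegrable (by fun_prop) _ _)]
    simp
  refine ⟨q, fun x y hxy => ?_, fun t => ?_, ?_, hid⟩
  · refine intervalIntegral.integral_mono_on zero_le_one
      (Continuous.intervalIntegrable (by fun_prop) _ _)
      (Continuous.intervalIntegrable (by fun_prop) _ _) fun θ hθ => ?_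
    have h2 : max x 0 ^ 2 ≤ max y 0 ^ 2 :=
      pow_le_pow_left₀ (le_max_right _ _) (max_le_max_right 0 hxy) 2
    have h3 : -c * (1 + θ * (max y 0 ^ 2 - 1)) ≤ -c * (1 + θ * (max x 0 ^ 2 - 1)) := by
      have := mul_nonneg hc (mul_nonneg hθ.1 (sub_nonneg.2 h2))
      linarith
    gcongr
  · exact intervalIntegral.integral_nonneg zero_le_one fun θ _ => by positivity
  · have h := hid 0 le_rfl
    norm_num at h
    linarith [Real.exp_pos (-c)]

theorem exists_antitone_mul_eq_one_sub :
    ∃ q : ℝ → ℝ, Antitone q ∧ (∀ t, 0 ≤ q t) ∧ q 0 ≤ 1 ∧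
      ∀ t, 0 ≤ t → q t * (1 - t ^ 2) = 1 - (t + 1) / (2 * √((t + 2) / 3)) := by
  set r : ℝ → ℝ := fun t => √((max t 0 + 2) / 3) with hr
  have hrpos : ∀ t, 1 / 2 ≤ r t := fun t => by
    apply Real.le_sqrt_of_sq_le
    linarith [le_max_right t 0]
  have hrmono : Monotone r := fun x y hxy => by
    have : max x 0 ≤ max y 0 := max_le_max_right 0 hxy
    simp only [hr]
    gcongr
  set q : ℝ → ℝ := fun t => 1 / 6 * (3 + 1 / r t) * (1 / (1 + r t)) * (1 / (1 + max t 0)) with hq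
  refine ⟨q, fun x y hxy => ?_, fun t => ?_, ?_, fun t ht => ?_⟩
  · have h1 := hrmono hxy
    have h2 : max x 0 ≤ max y 0 := max_le_max_right 0 hxy
    have h3 : 0 < r x := by linarith [hrpos x]
    have h4 : 0 < r y := by linarith [hrpos y]
    have h5 : 0 ≤ max x 0 := le_max_right _ _
    have h6 : 0 ≤ max y 0 := le_max_right _ _
    simp only [hq]
    gcongr
  · have h3 : 0 < r t := by linarith [hrpos t]
    have h5 : 0 ≤ max t 0 := le_max_right _ _
    positivity
  · have h := hrpos 0
    have h1 : 1 / r 0 ≤ 2 := by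
      rw [div_le_iff₀ (by linarith)]; linarith
    have h2 : 1 / (1 + r 0) ≤ 1 := by
      rw [div_le_iff₀ (by linarith)]; linarith
    have h3 : 0 ≤ 1 / r 0 := by
      have : 0 < r 0 := by linarith
      positivity
    simp only [hq, max_self, add_zero, div_one, mul_one]
    calc 1 / 6 * (3 + 1 / r 0) * (1 / (1 + r 0)) ≤ 1 / 6 * (3 + 1 / r 0) * 1 := by gcongr
      _ ≤ 1 := by linarith
  · have h := hrpos t
    have hsq : r t ^ 2 = (t + 2) / 3 := by
      simp only [hr, max_eq_left ht]
      exact Real.sq_sqrt (by linarith)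
    have hrt : √((t + 2) / 3) = r t := by simp only [hr, max_eq_left ht]
    rw [hrt]
    simp only [hq, max_eq_left ht]
    have h0 : r t ≠ 0 := by linarith
    have h1 : 1 + r t ≠ 0 := by linarith
    have h2 : 1 + t ≠ 0 := by linarith
    have ht' : t = 3 * r t ^ 2 - 2 := by linarith
    generalize r t = ρ at *
    field_simp
    subst ht'
    ring

theorem integral_airy_substitution {l R : ℝ} (hR : 0 ≤ R) :
    ∫ t in (0 : ℝ)..R, (((t + 1) / (2 * √((t + 2) / 3)) : ℝ) : ℂ)
        * Complex.exp (2 * Real.pi * l * ((t - t ^ 3 / 3 : ℝ) : ℂ) * Complex.I)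
      = Complex.exp (2 * Real.pi * l * (2 / 3) * Complex.I)
        * ∫ w in (-√(2 / 3))..((R - 1) * √((R + 2) / 3)),
          Complex.exp (-(2 * Real.pi * l * Complex.I) * (w : ℂ) ^ 2) := by
  have hpos : ∀ t ∈ Set.uIcc 0 R, 0 < (t + 2) / 3 := fun t ht => by
    rw [Set.uIcc_of_le hR] at ht
    linarith [ht.1]
  have hd : ∀ t ∈ Set.uIcc 0 R, HasDerivAt (fun t => (t - 1) * √((t + 2) / 3))
      ((t + 1) / (2 * √((t + 2) / 3))) t := fun t ht => by
    have h := ((hasDerivAt_id t).sub_const 1).mul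
      ((((hasDerivAt_id t).add_const 2).div_const 3).sqrt (hpos t ht).ne')
    refine h.congr_deriv ?_
    have h1 := Real.sq_sqrt (hpos t ht).le
    have h0 := (Real.sqrt_pos.2 (hpos t ht)).ne'
    simp only [id]
    generalize √((t + 2) / 3) = ρ at *
    field_simp
    linarith
  have hsub := intervalIntegral.integral_deriv_smul_comp' (a := 0) (b := R) hd
    (ContinuousOn.div (by fun_prop) (by fun_prop) fun t ht => by
      have := Real.sqrt_pos.2 (hpos t ht); positivity)
    (g := fun w : ℝ => Complex.exp (-(2 * Real.pi * l * Complex.I) * (w : ℂ) ^ 2)) (by fun_prop)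
  have h0 : ((0 : ℝ) - 1) * √((0 + 2) / 3) = -√(2 / 3) := by norm_num
  rw [h0] at hsub
  rw [← hsub, ← intervalIntegral.integral_const_mul]
  refine intervalIntegral.integral_congr fun t ht => ?_
  have hw : ((t - 1) * √((t + 2) / 3)) ^ 2 = 2 / 3 - (t - t ^ 3 / 3) := by
    rw [mul_pow, Real.sq_sqrt (hpos t ht).le]; ring
  have hwc : ((((t - 1) * √((t + 2) / 3) : ℝ) : ℂ)) ^ 2
      = ((2 / 3 - (t - t ^ 3 / 3) : ℝ) : ℂ) := by rw [← hw]; push_cast; rfl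
  simp only [Function.comp, Complex.real_smul]
  rw [hwc, mul_left_comm, ← Complex.exp_add]
  congr 2
  push_cast
  ring

theorem norm_integral_fresnel_neg_sub_le {l A W : ℝ} (hl : 0 < l) (hA : 1 / 2 ≤ A)
    (hW : 1 / 2 ≤ W) :
    ‖(∫ w in (-A)..W, Complex.exp (-(2 * Real.pi * l * Complex.I) * (w : ℂ) ^ 2))
      - (Real.pi / (2 * Real.pi * l * Complex.I)) ^ (1 / 2 : ℂ)‖ ≤ 2 / (Real.pi * l) := by
  have hpi := Real.pi_pos
  set f : ℝ → ℂ := fun w => Complex.exp (-(2 * Real.pi * l * Complex.I) * (w : ℂ) ^ 2) with hf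
  have hc : Continuous f := by fun_prop
  have hle : ∀ V : ℝ, 1 / 2 ≤ V → 1 / (2 * V) / (Real.pi * l) ≤ 1 / (Real.pi * l) := by
    intro V hV
    gcongr
    rw [div_le_one (by linarith)]
    linarith
  have h1 := (norm_fresnel_sub_le hl (by linarith : 0 < A)).trans (hle A hA)
  have h2 := (norm_fresnel_sub_le hl (by linarith : 0 < W)).trans (hle W hW)
  have hneg : ∫ w in (-A)..0, f w = ∫ w in (0 : ℝ)..A, f w := by
    have := intervalIntegral.integral_comp_neg (a := 0) (b := A) f
    rw [neg_zero] at this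
    rw [← this]
    simp [hf]
  rw [← intervalIntegral.integral_add_adjacent_intervals (hc.intervalIntegrable (-A) 0)
    (hc.intervalIntegrable 0 W), hneg]
  refine le_trans (le_of_eq_of_le ?_ (norm_add_le_of_le h1 h2)) (le_of_eq (by ring))
  congr 1
  ring

theorem norm_integral_airy_sub_le {c l R : ℝ} (hc : 0 ≤ c) (hl : 0 < l) (hR : 2 ≤ R) :
    ‖(∫ t in (0 : ℝ)..R, (Real.exp (-c * t ^ 2) : ℂ)
        * Complex.exp (2 * Real.pi * l * ((t - t ^ 3 / 3 : ℝ) : ℂ) * Complex.I))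
      - Real.exp (-c) * (Complex.exp (2 * Real.pi * l * (2 / 3) * Complex.I)
        * (Real.pi / (2 * Real.pi * l * Complex.I)) ^ (1 / 2 : ℂ))‖ ≤ 4 / (Real.pi * l) := by
  have hpi := Real.pi_pos
  have hR0 : 0 ≤ R := by linarith
  obtain ⟨q₁, hq₁, hq₁0, hq₁1, hq₁id⟩ := exists_antitone_mul_eq_exp_sub hc
  obtain ⟨q₂, hq₂, hq₂0, hq₂1, hq₂id⟩ := exists_antitone_mul_eq_one_sub
  have hec : Real.exp (-c) ≤ 1 := Real.exp_le_one_iff.2 (by linarith)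
  have hosc : ∀ q : ℝ → ℝ, Antitone q → (∀ t, 0 ≤ q t) → q 0 ≤ 2 →
      ‖∫ t in (0 : ℝ)..R, ((q t * (1 - t ^ 2) : ℝ) : ℂ)
        * Complex.exp (2 * Real.pi * l * ((t - t ^ 3 / 3 : ℝ) : ℂ) * Complex.I)‖
        ≤ 2 / (Real.pi * l) := by
    intro q hq hq0 hq2
    refine (norm_integral_antitone_mul_oscillatory_le hq hq0 (θ := fun t => t - t ^ 3 / 3)
      (θ' := fun t => 1 - t ^ 2) hR0 hl (fun t => ?_) (by fun_prop)).trans (by gcongr)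
    refine ((hasDerivAt_id t).fun_sub ((hasDerivAt_pow 3 t).div_const 3)).congr_deriv ?_
    norm_num
  have h1 := hosc (fun t => q₁ t + Real.exp (-c) * q₂ t)
    (fun x y hxy => add_le_add (hq₁ hxy)
      (mul_le_mul_of_nonneg_left (hq₂ hxy) (Real.exp_pos _).le))
    (fun t => add_nonneg (hq₁0 t) (mul_nonneg (Real.exp_pos _).le (hq₂0 t)))
    (by nlinarith [hq₂0 0])
  have hA : 1 / 2 ≤ √(2 / 3 : ℝ) := Real.le_sqrt_of_sq_le (by norm_num)
  have hW : 1 / 2 ≤ (R - 1) * √((R + 2) / 3) := by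
    have : 1 ≤ √((R + 2) / 3) := Real.le_sqrt_of_sq_le (by linarith)
    nlinarith
  have h2 := norm_integral_fresnel_neg_sub_le hl hA hW
  have hsplit : ∫ t in (0 : ℝ)..R, (((q₁ t + Real.exp (-c) * q₂ t) * (1 - t ^ 2) : ℝ) : ℂ)
        * Complex.exp (2 * Real.pi * l * ((t - t ^ 3 / 3 : ℝ) : ℂ) * Complex.I)
      = (∫ t in (0 : ℝ)..R, (Real.exp (-c * t ^ 2) : ℂ)
        * Complex.exp (2 * Real.pi * l * ((t - t ^ 3 / 3 : ℝ) : ℂ) * Complex.I))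
      - Real.exp (-c) * ∫ t in (0 : ℝ)..R, (((t + 1) / (2 * √((t + 2) / 3)) : ℝ) : ℂ)
        * Complex.exp (2 * Real.pi * l * ((t - t ^ 3 / 3 : ℝ) : ℂ) * Complex.I) := by
    rw [← intervalIntegral.integral_const_mul, ← intervalIntegral.integral_sub]
    · refine intervalIntegral.integral_congr fun t ht => ?_
      rw [Set.uIcc_of_le hR0] at ht
      have : (q₁ t + Real.exp (-c) * q₂ t) * (1 - t ^ 2)
          = Real.exp (-c * t ^ 2) - Real.exp (-c) * ((t + 1) / (2 * √((t + 2) / 3))) := by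
        rw [add_mul, mul_assoc, hq₁id t ht.1, hq₂id t ht.1]; ring
      simp only [this]
      push_cast
      ring
    · exact Continuous.intervalIntegrable (by fun_prop) _ _
    · refine ContinuousOn.intervalIntegrable ?_
      have : ContinuousOn (fun t : ℝ => (t + 1) / (2 * √((t + 2) / 3))) (Set.uIcc 0 R) := by
        refine ContinuousOn.div (by fun_prop) (by fun_prop) fun t ht => ?_
        rw [Set.uIcc_of_le hR0] at ht
        have := Real.sqrt_pos.2 (by linarith [ht.1] : 0 < (t + 2) / 3)
        positivity
      exact continuousOn_const.mul
        ((Complex.continuous_ofReal.comp_continuousOn this).mul (by fun_prop))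
  rw [hsplit, integral_airy_substitution hR0] at h1
  have hphase : ‖Complex.exp (2 * Real.pi * l * (2 / 3) * Complex.I)‖ = 1 := by
    rw [show (2 * Real.pi * l * (2 / 3) * Complex.I : ℂ)
      = ((2 * Real.pi * l * (2 / 3) : ℝ) : ℂ) * Complex.I by push_cast; rfl,
      Complex.norm_exp_ofReal_mul_I]
  have h3 : ‖(Real.exp (-c) : ℂ) * (Complex.exp (2 * Real.pi * l * (2 / 3) * Complex.I)
      * ((∫ w in (-√(2 / 3))..((R - 1) * √((R + 2) / 3)),
          Complex.exp (-(2 * Real.pi * l * Complex.I) * (w : ℂ) ^ 2))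
      - (Real.pi / (2 * Real.pi * l * Complex.I)) ^ (1 / 2 : ℂ)))‖ ≤ 2 / (Real.pi * l) := by
    rw [norm_mul, norm_mul, hphase, one_mul, Complex.norm_real, Real.norm_eq_abs, Real.abs_exp]
    exact (mul_le_of_le_one_left (norm_nonneg _) hec).trans h2
  refine le_trans (le_of_eq_of_le ?_ (norm_add_le_of_le h1 h3)) (le_of_eq (by ring))
  congr 1
  ring

theorem pi_div_two_pi_mul_I_cpow_half {l : ℝ} (hl : 0 < l) :
    (Real.pi / (2 * Real.pi * l * Complex.I) : ℂ) ^ (1 / 2 : ℂ)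
      = ((1 / √(2 * l) : ℝ) : ℂ) * Complex.exp (((-(Real.pi / 4) : ℝ) : ℂ) * Complex.I) := by
  have hpi := Real.pi_pos
  have hs : 0 < √(2 * l) := by positivity
  set x : ℂ := ((1 / √(2 * l) : ℝ) : ℂ) * Complex.exp (((-(Real.pi / 4) : ℝ) : ℂ) * Complex.I)
    with hx
  have hre : 0 < x.re := by
    rw [hx, Complex.re_ofReal_mul, Complex.exp_ofReal_mul_I_re, Real.cos_neg,
      Real.cos_pi_div_four]
    positivity
  have hsq : x ^ 2 = Real.pi / (2 * Real.pi * l * Complex.I) := by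
    have h1 : Complex.exp (((-(Real.pi / 4) : ℝ) : ℂ) * Complex.I) ^ 2 = -Complex.I := by
      rw [← Complex.exp_nat_mul]
      have : ((2 : ℕ) : ℂ) * (((-(Real.pi / 4) : ℝ) : ℂ) * Complex.I)
          = -(Real.pi / 2 * Complex.I) := by push_cast; ring
      rw [this, Complex.exp_neg, Complex.exp_pi_div_two_mul_I, Complex.inv_I]
    have h2 : (((1 / √(2 * l) : ℝ) : ℂ)) ^ 2 = ((1 / (2 * l) : ℝ) : ℂ) := by
      rw [← Complex.ofReal_pow, div_pow, Real.sq_sqrt (by positivity), one_pow]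
    have hpi' : (Real.pi : ℂ) ≠ 0 := by simp
    have hl' : (l : ℂ) ≠ 0 := by simp [hl.ne']
    rw [hx, mul_pow, h1, h2, eq_div_iff (by simp [hl.ne'])]
    push_cast
    field_simp
    simp
  rw [← hsq, one_div]
  exact Complex.sq_cpow_two_inv hre

theorem norm_integral_gaussian_airy_sub_le {c l : ℝ} (hc : 0 < c) (hl : 0 < l) :
    ‖(∫ t : ℝ, (Real.exp (-c * t ^ 2) : ℂ)
        * Complex.exp (2 * Real.pi * l * ((t - t ^ 3 / 3 : ℝ) : ℂ) * Complex.I))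
      - ((2 * (Real.exp (-c) / √(2 * l)
        * Real.cos (2 * Real.pi * l * (2 / 3) - Real.pi / 4)) : ℝ) : ℂ)‖
      ≤ 8 / (Real.pi * l) := by
  set f : ℝ → ℂ := fun t => (Real.exp (-c * t ^ 2) : ℂ)
    * Complex.exp (2 * Real.pi * l * ((t - t ^ 3 / 3 : ℝ) : ℂ) * Complex.I) with hf
  have hexp : ∀ t : ℝ, Complex.exp (2 * Real.pi * l * ((t - t ^ 3 / 3 : ℝ) : ℂ) * Complex.I)
      = Complex.exp (((2 * Real.pi * l * (t - t ^ 3 / 3) : ℝ) : ℂ) * Complex.I) := fun t => by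
    push_cast; rfl
  have hint : Integrable f := by
    refine (integrable_exp_neg_mul_sq hc).mono' (by fun_prop) (Filter.Eventually.of_forall ?_)
    intro t
    simp only [hf]
    rw [hexp, norm_mul, Complex.norm_exp_ofReal_mul_I, Complex.norm_real, mul_one,
      Real.norm_eq_abs, Real.abs_exp]
  have hconj : ∀ t, f (-t) = (starRingEnd ℂ) (f t) := by
    intro t
    simp only [hf]
    rw [map_mul, Complex.conj_ofReal, ← Complex.exp_conj, map_mul, Complex.conj_I, neg_sq]
    congr 2
    simp only [map_mul, Complex.conj_ofReal, map_ofNat]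
    push_cast
    ring
  set J : ℂ := ∫ t in Set.Ioi (0 : ℝ), f t with hJ
  have hwhole : ∫ t, f t = J + (starRingEnd ℂ) J := by
    rw [← intervalIntegral.integral_Iic_add_Ioi (b := 0) hint.integrableOn hint.integrableOn,
      add_comm]
    congr 1
    have := integral_comp_neg_Ioi 0 f
    rw [neg_zero] at this
    rw [← this, hJ, ← integral_conj]
    simp_rw [hconj]
  set M : ℂ := Real.exp (-c) * (Complex.exp (2 * Real.pi * l * (2 / 3) * Complex.I)
    * (Real.pi / (2 * Real.pi * l * Complex.I)) ^ (1 / 2 : ℂ)) with hM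
  have hJM : ‖J - M‖ ≤ 4 / (Real.pi * l) := by
    have hlim := intervalIntegral_tendsto_integral_Ioi 0 hint.integrableOn Filter.tendsto_id
    refine le_of_tendsto ((hlim.sub_const M).norm) ?_
    filter_upwards [Filter.eventually_ge_atTop 2] with R hR
    exact norm_integral_airy_sub_le hc.le hl hR
  have hMM : M + (starRingEnd ℂ) M = ((2 * (Real.exp (-c) / √(2 * l)
      * Real.cos (2 * Real.pi * l * (2 / 3) - Real.pi / 4)) : ℝ) : ℂ) := by
    have : M = ((Real.exp (-c) / √(2 * l) : ℝ) : ℂ)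
        * Complex.exp (((2 * Real.pi * l * (2 / 3) - Real.pi / 4 : ℝ) : ℂ) * Complex.I) := by
      rw [hM, pi_div_two_pi_mul_I_cpow_half hl, mul_left_comm (Complex.exp _),
        ← Complex.exp_add, ← mul_assoc, ← Complex.ofReal_mul]
      congr 2
      · congr 1; ring
      · push_cast; ring
    rw [Complex.add_conj, this, Complex.re_ofReal_mul, Complex.exp_ofReal_mul_I_re]
  rw [hwhole, ← hMM, show J + (starRingEnd ℂ) J - (M + (starRingEnd ℂ) M)
    = (J - M) + (starRingEnd ℂ) (J - M) by rw [map_sub]; ring]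
  refine (norm_add_le _ _).trans ?_
  rw [RCLike.norm_conj]
  exact (add_le_add hJM hJM).trans (le_of_eq (by ring))

theorem Fab_eq_scaled_integral {a β s : ℝ} (hs : 0 < s) (hβ : β * s ^ 2 = a / 3) :
    Fab (-a) β = s * ∫ t : ℝ, (Real.exp (-(Real.pi * s ^ 2) * t ^ 2) : ℂ)
      * Complex.exp (2 * Real.pi * (a * s : ℝ) * ((t - t ^ 3 / 3 : ℝ) : ℂ) * Complex.I) := by
  have h := Measure.integral_comp_mul_left (fun x : ℝ => (gauss x : ℂ) *
    Complex.exp (2 * Real.pi * Complex.I * ((-β * x ^ 3 - (-a) * x : ℝ) : ℂ))) s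
  rw [abs_of_pos (inv_pos.2 hs), Complex.real_smul] at h
  have hsc : (s : ℂ) ≠ 0 := by simp [hs.ne']
  have h' : Fab (-a) β = s * ∫ t : ℝ, (gauss (s * t) : ℂ) *
      Complex.exp (2 * Real.pi * Complex.I * ((-β * (s * t) ^ 3 - (-a) * (s * t) : ℝ) : ℂ)) := by
    rw [h, Fab]
    push_cast
    field_simp
  rw [h']
  congr 2
  ext t
  have h1 : gauss (s * t) = Real.exp (-(Real.pi * s ^ 2) * t ^ 2) := by
    rw [gauss]; congr 1; ring
  have h2 : -β * (s * t) ^ 3 - (-a) * (s * t) = a * s * (t - t ^ 3 / 3) := by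
    linear_combination (-(s * t ^ 3)) * hβ
  rw [h1, h2]
  congr 2
  push_cast
  ring

theorem stmt8 :
    ∃ C : ℝ, ∀ α β : ℝ, α < 0 → 0 < β →
      ‖Fab α β -
        (((2 : ℝ) ^ ((1 : ℝ)/2) * Real.exp (-(Real.pi * |α|) / (3 * β)) /
            (3 * |α| * β) ^ ((1 : ℝ)/4) *
            Real.cos (2 * Real.pi *
              (1/8 - 2 * |α| ^ ((3 : ℝ)/2) / ((3 : ℝ) ^ ((3 : ℝ)/2) * β ^ ((1 : ℝ)/2)))) : ℝ) : ℂ)‖ ≤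
        C / |α| := by
  refine ⟨8 / Real.pi, fun α β hα hβ => ?_⟩
  have hpi := Real.pi_pos
  obtain ⟨a, ha, rfl⟩ : ∃ a : ℝ, 0 < a ∧ α = -a := ⟨-α, by linarith, by ring⟩
  rw [abs_neg, abs_of_pos ha]
  set s : ℝ := √(a / (3 * β)) with hs
  have hspos : 0 < s := Real.sqrt_pos.2 (by positivity)
  have hssq : s ^ 2 = a / (3 * β) := Real.sq_sqrt (by positivity)
  have hβs : β * s ^ 2 = a / 3 := by rw [hssq]; field_simp
  have hthree_halves : ∀ x : ℝ, 0 < x → x ^ ((3 : ℝ) / 2) = x * √x := fun x hx => by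
    rw [show (3 : ℝ) / 2 = 1 + 1 / 2 by norm_num, Real.rpow_add hx, Real.rpow_one,
      Real.sqrt_eq_rpow]
  have hquarter : (3 * a * β) ^ ((1 : ℝ) / 4) = √(a / s) := by
    have : 3 * a * β = (a / s) ^ 2 := by
      rw [div_pow, hssq]; field_simp
    rw [this, ← Real.rpow_natCast, ← Real.rpow_mul (by positivity), Real.sqrt_eq_rpow]
    norm_num
  have hphase : 2 * a ^ ((3 : ℝ) / 2) / ((3 : ℝ) ^ ((3 : ℝ) / 2) * β ^ ((1 : ℝ) / 2))
      = a * s * (2 / 3) := by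
    rw [hthree_halves a ha, hthree_halves 3 (by norm_num), ← Real.sqrt_eq_rpow, hs,
      Real.sqrt_div ha.le, Real.sqrt_mul (by norm_num)]
    have := Real.sqrt_pos.2 hβ
    field_simp
  have hamp : (2 : ℝ) ^ ((1 : ℝ) / 2) / √(a / s) = s * (2 / √(2 * (a * s))) := by
    rw [← Real.sqrt_eq_rpow]
    have h2 : √(2 * (a * s)) = √2 * √(a / s) * s := by
      rw [← Real.sqrt_mul (by norm_num), show 2 * (a * s) = 2 * (a / s) * s ^ 2 by field_simp,
        Real.sqrt_mul (by positivity), Real.sqrt_sq hspos.le]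
    have h3 : 0 < √(a / s) := Real.sqrt_pos.2 (by positivity)
    rw [h2]
    field_simp
    norm_num
  have hmain : (2 : ℝ) ^ ((1 : ℝ) / 2) * Real.exp (-(Real.pi * a) / (3 * β)) /
      (3 * a * β) ^ ((1 : ℝ) / 4) * Real.cos (2 * Real.pi *
        (1/8 - 2 * a ^ ((3 : ℝ) / 2) / ((3 : ℝ) ^ ((3 : ℝ) / 2) * β ^ ((1 : ℝ) / 2))))
      = s * (2 * (Real.exp (-(Real.pi * s ^ 2)) / √(2 * (a * s))
        * Real.cos (2 * Real.pi * (a * s) * (2 / 3) - Real.pi / 4))) := by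
    rw [hphase, hquarter, mul_div_right_comm, hamp, ← Real.cos_neg (2 * Real.pi * (a * s) * _ - _),
      hssq]
    rw [show -(Real.pi * a) / (3 * β) = -(Real.pi * (a / (3 * β))) by ring,
      show -(2 * Real.pi * (a * s) * (2 / 3) - Real.pi / 4)
        = 2 * Real.pi * (1 / 8 - a * s * (2 / 3)) by ring]
    ring
  rw [hmain, Fab_eq_scaled_integral hspos hβs, Complex.ofReal_mul s, ← mul_sub, norm_mul,
    Complex.norm_real, Real.norm_eq_abs, abs_of_pos hspos]
  refine (mul_le_mul_of_nonneg_left (norm_integral_gaussian_airy_sub_le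
    (c := Real.pi * s ^ 2) (l := a * s) (by positivity) (by positivity)) hspos.le).trans_eq ?_
  field_simp
end

section
/- For B ≥ 1 let N_aff(B) be the number of quadruples (x₀,x₁,x₂,x₃) ∈ ℤ⁴ with x₀² = x₁x₂³ + x₁³x₃, x₀ ≥ 1, x₁ ≥ 1, gcd(x₁,x₂,x₃) = 1, x₁ ≤ B, |x₂| ≤ B, |x₃| ≤ B, x₀ ≤ B², and let N_tors(B) be the number of tuples (η₁,…,η₈,α₁,α₂,α₃) ∈ ℤ¹¹ satisfying: the torsor equation η₁²η₂α₁³ + η₇α₂² + η₄η₅²η₆³η₈⁴α₃ = 0; the positivity conditions η₁,…,η₈ ≥ 1 and α₂ ≥ 1; the height conditions η₁²η₂⁴η₃⁶η₄⁵η₅⁴η₆³η₇³η₈² ≤ B, |η₁²η₂³η₃⁴η₄³η₅²η₆η₇² α₁| ≤ B, |α₃| ≤ B, and η₁³η₂⁶η₃⁹η₄⁷η₅⁵η₆³η₇⁵η₈ α₂ ≤ B²; and the coprimality conditions gcd(α₁, η₂η₃η₄η₅η₆η₇η₈) = 1, gcd(α₂, η₁η₂η₃η₄η₅η₆η₈)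 = 1, gcd(α₃, η₁η₂η₃η₄η₅η₆η₇) = 1, gcd(η₈, η₁η₂η₃η₄η₅η₇) = 1, gcd(η₇, η₁η₂η₄η₅η₆) = 1, gcd(η₆, η₁η₂η₃η₄) = 1, gcd(η₅, η₁η₂η₃) = 1, gcd(η₄, η₁η₂) = 1, gcd(η₃, η₁) = 1. Then N_aff(B) = N_tors(B) + O(B^{2/3}) as B → ∞. -/
open scoped BigOperators

/-- `N_aff(B)`: the number of quadruples `(x₀,x₁,x₂,x₃) ∈ ℤ⁴` with `x₀² = x₁x₂³ + x₁³x₃`,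
`x₀ ≥ 1`, `x₁ ≥ 1`, `gcd(x₁,x₂,x₃) = 1`, `x₁ ≤ B`, `|x₂| ≤ B`, `|x₃| ≤ B`, `x₀ ≤ B²`. -/
noncomputable def Naff (B : ℝ) : ℕ :=
  Nat.card {x : ℤ × ℤ × ℤ × ℤ //
    x.1 ^ 2 = x.2.1 * x.2.2.1 ^ 3 + x.2.1 ^ 3 * x.2.2.2 ∧
    1 ≤ x.1 ∧ 1 ≤ x.2.1 ∧
    Int.gcd x.2.1 (Int.gcd x.2.2.1 x.2.2.2) = 1 ∧
    (x.2.1 : ℝ) ≤ B ∧ |(x.2.2.1 : ℝ)| ≤ B ∧ |(x.2.2.2 : ℝ)| ≤ B ∧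
    (x.1 : ℝ) ≤ B ^ 2}

/-- `N_tors(B)`: the number of tuples `(η₁,…,η₈,α₁,α₂,α₃) ∈ ℤ¹¹` on the universal torsor
`η₁²η₂α₁³ + η₇α₂² + η₄η₅²η₆³η₈⁴α₃ = 0` subject to the positivity, height and coprimality
conditions. Here `v.1 i` is `η_{i+1}`, `v.2.1 = α₁`, `v.2.2.1 = α₂`, `v.2.2.2 = α₃`. -/
noncomputable def Ntors (B : ℝ) : ℕ :=
  Nat.card {v : (Fin 8 → ℤ) × ℤ × ℤ × ℤ //
    v.1 0 ^ 2 * v.1 1 * v.2.1 ^ 3 + v.1 6 * v.2.2.1 ^ 2 +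
      v.1 3 * v.1 4 ^ 2 * v.1 5 ^ 3 * v.1 7 ^ 4 * v.2.2.2 = 0 ∧
    (∀ i, 1 ≤ v.1 i) ∧ 1 ≤ v.2.2.1 ∧
    ((v.1 0 ^ 2 * v.1 1 ^ 4 * v.1 2 ^ 6 * v.1 3 ^ 5 * v.1 4 ^ 4 * v.1 5 ^ 3 * v.1 6 ^ 3 *
        v.1 7 ^ 2 : ℤ) : ℝ) ≤ B ∧
    |((v.1 0 ^ 2 * v.1 1 ^ 3 * v.1 2 ^ 4 * v.1 3 ^ 3 * v.1 4 ^ 2 * v.1 5 * v.1 6 ^ 2 *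
        v.2.1 : ℤ) : ℝ)| ≤ B ∧
    |((v.2.2.2 : ℤ) : ℝ)| ≤ B ∧
    ((v.1 0 ^ 3 * v.1 1 ^ 6 * v.1 2 ^ 9 * v.1 3 ^ 7 * v.1 4 ^ 5 * v.1 5 ^ 3 * v.1 6 ^ 5 *
        v.1 7 * v.2.2.1 : ℤ) : ℝ) ≤ B ^ 2 ∧
    Int.gcd v.2.1 (v.1 1 * v.1 2 * v.1 3 * v.1 4 * v.1 5 * v.1 6 * v.1 7) = 1 ∧
    Int.gcd v.2.2.1 (v.1 0 * v.1 1 * v.1 2 * v.1 3 * v.1 4 * v.1 5 * v.1 7) = 1 ∧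
    Int.gcd v.2.2.2 (v.1 0 * v.1 1 * v.1 2 * v.1 3 * v.1 4 * v.1 5 * v.1 6) = 1 ∧
    Int.gcd (v.1 7) (v.1 0 * v.1 1 * v.1 2 * v.1 3 * v.1 4 * v.1 6) = 1 ∧
    Int.gcd (v.1 6) (v.1 0 * v.1 1 * v.1 3 * v.1 4 * v.1 5) = 1 ∧
    Int.gcd (v.1 5) (v.1 0 * v.1 1 * v.1 2 * v.1 3) = 1 ∧
    Int.gcd (v.1 4) (v.1 0 * v.1 1 * v.1 2) = 1 ∧
    Int.gcd (v.1 3) (v.1 0 * v.1 1) = 1 ∧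
    Int.gcd (v.1 2) (v.1 0) = 1}

lemma Int.dvd_of_forall_padicValInt_le {m n : ℤ} (hm : m ≠ 0) (hn : n ≠ 0)
    (h : ∀ p : ℕ, p.Prime → padicValInt p m ≤ padicValInt p n) : m ∣ n := by
  rw [← Int.natAbs_dvd_natAbs, ← Nat.factorization_prime_le_iff_dvd (by simpa) (by simpa)]
  intro p hp
  simpa [Nat.factorization_def _ hp, padicValInt] using h p hp

lemma Int.eq_of_forall_padicValInt_eq {m n : ℤ} (hm : 1 ≤ m) (hn : 1 ≤ n)
    (h : ∀ p : ℕ, p.Prime → padicValInt p m = padicValInt p n) : m = n :=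
  Int.dvd_antisymm (by omega) (by omega)
    (Int.dvd_of_forall_padicValInt_le (by omega) (by omega) fun p hp => (h p hp).le)
    (Int.dvd_of_forall_padicValInt_le (by omega) (by omega) fun p hp => (h p hp).ge)

lemma Int.exists_padicValInt_eq {n : ℤ} (hn : n ≠ 0) (g : ℕ → ℕ)
    (hg : ∀ p : ℕ, p.Prime → g p ≤ padicValInt p n) :
    ∃ m : ℤ, 1 ≤ m ∧ ∀ p : ℕ, p.Prime → padicValInt p m = g p := by
  have hpr : ∀ q ∈ n.natAbs.primeFactors, (q ^ g q) ≠ 0 := fun q hq =>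
    pow_ne_zero _ (Nat.prime_of_mem_primeFactors hq).ne_zero
  refine ⟨((∏ q ∈ n.natAbs.primeFactors, q ^ g q : ℕ) : ℤ), ?_, ?_⟩
  · have := Finset.prod_ne_zero_iff.mpr hpr
    omega
  · intro p hp
    rw [padicValInt.of_nat, ← Nat.factorization_def _ hp, Nat.factorization_prod_apply hpr]
    have hterm : ∀ q ∈ n.natAbs.primeFactors,
        (q ^ g q).factorization p = if q = p then g p else 0 := by
      intro q hq
      rw [(Nat.prime_of_mem_primeFactors hq).factorization_pow, Finsupp.single_apply]
      split_ifs with h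
      · rw [h]
      · rfl
    rw [Finset.sum_congr rfl hterm, Finset.sum_ite_eq']
    split_ifs with h
    · rfl
    · have h0 : padicValInt p n = 0 := by
        apply padicValInt.eq_zero_of_not_dvd
        intro hd
        exact h (Nat.mem_primeFactors.mpr ⟨hp, Int.natCast_dvd.mp hd, by simpa⟩)
      have := hg p hp
      omega

lemma padicValInt_ne_zero_iff_dvd {p : ℕ} (hp : p.Prime) {n : ℤ} (hn : n ≠ 0) :
    padicValInt p n ≠ 0 ↔ (p : ℤ) ∣ n := by
  have := Fact.mk hp
  have h := padicValInt_dvd_iff (p := p) 1 n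
  rw [pow_one] at h
  rw [h]
  omega

lemma padicValInt_pow {p : ℕ} (hp : p.Prime) {n : ℤ} (k : ℕ) :
    padicValInt p (n ^ k) = k * padicValInt p n := by
  rw [padicValInt, Int.natAbs_pow, ← Nat.factorization_def _ hp, Nat.factorization_pow,
    Finsupp.smul_apply, Nat.factorization_def _ hp, padicValInt, smul_eq_mul]

lemma padicValInt_prod_pow {p : ℕ} (hp : p.Prime) {ι : Type*} (s : Finset ι) (η : ι → ℤ)
    (c : ι → ℕ) (hη : ∀ i, η i ≠ 0) :
    padicValInt p (∏ i ∈ s, η i ^ c i) = ∑ i ∈ s, c i * padicValInt p (η i) := by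
  classical
  have := Fact.mk hp
  induction s using Finset.induction_on with
  | empty => simp
  | insert a s ha ih =>
    rw [Finset.prod_insert ha, Finset.sum_insert ha, padicValInt.mul (pow_ne_zero _ (hη a))
      (Finset.prod_ne_zero_iff.mpr fun i _ => pow_ne_zero _ (hη i)), ih, padicValInt_pow hp]

lemma Int.gcd_eq_one_of_forall_prime {a b : ℤ}
    (h : ∀ p : ℕ, p.Prime → (p : ℤ) ∣ a → ¬ (p : ℤ) ∣ b) : Int.gcd a b = 1 := by
  by_contra hne
  obtain ⟨p, hp, hd⟩ := Nat.exists_prime_and_dvd hne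
  exact h p hp ((Int.natCast_dvd_natCast.mpr hd).trans (Int.gcd_dvd_left a b))
    ((Int.natCast_dvd_natCast.mpr hd).trans (Int.gcd_dvd_right a b))

lemma Int.not_dvd_of_gcd_eq_one {a b : ℤ} (h : Int.gcd a b = 1) {p : ℕ} (hp : p.Prime)
    (ha : (p : ℤ) ∣ a) : ¬ (p : ℤ) ∣ b := by
  intro hb
  have h1 := Int.dvd_coe_gcd ha hb
  rw [h] at h1
  exact (Nat.prime_iff_prime_int.mp hp).not_isUnit (isUnit_of_dvd_one (by simpa using h1))

/-- The exponents of a prime in `η` and `α₂` are supported on one edge of the extended Dynkin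
diagram. -/
def EdgeSupported (e : Fin 8 → ℕ) (f : ℕ) : Prop :=
  (e 2 = 0 ∧ e 3 = 0 ∧ e 4 = 0 ∧ e 5 = 0 ∧ e 6 = 0 ∧ e 7 = 0 ∧ f = 0) ∨
  (e 0 = 0 ∧ e 3 = 0 ∧ e 4 = 0 ∧ e 5 = 0 ∧ e 6 = 0 ∧ e 7 = 0 ∧ f = 0) ∨
  (e 0 = 0 ∧ e 1 = 0 ∧ e 4 = 0 ∧ e 5 = 0 ∧ e 6 = 0 ∧ e 7 = 0 ∧ f = 0) ∨
  (e 0 = 0 ∧ e 1 = 0 ∧ e 2 = 0 ∧ e 5 = 0 ∧ e 6 = 0 ∧ e 7 = 0 ∧ f = 0) ∨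
  (e 0 = 0 ∧ e 1 = 0 ∧ e 2 = 0 ∧ e 3 = 0 ∧ e 6 = 0 ∧ e 7 = 0 ∧ f = 0) ∨
  (e 0 = 0 ∧ e 1 = 0 ∧ e 2 = 0 ∧ e 3 = 0 ∧ e 4 = 0 ∧ e 6 = 0 ∧ f = 0) ∨
  (e 0 = 0 ∧ e 1 = 0 ∧ e 3 = 0 ∧ e 4 = 0 ∧ e 5 = 0 ∧ e 7 = 0 ∧ f = 0) ∨
  (e 0 = 0 ∧ e 1 = 0 ∧ e 2 = 0 ∧ e 3 = 0 ∧ e 4 = 0 ∧ e 5 = 0 ∧ e 7 = 0)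

/-- The exponent vector of `x₁` in terms of `η`. -/
def expX1 : Fin 8 → ℕ := ![2, 4, 6, 5, 4, 3, 3, 2]

/-- The exponent vector of `gcd(x₁, x₂)` in terms of `η`. -/
def expGcd : Fin 8 → ℕ := ![2, 3, 4, 3, 2, 1, 2, 0]

/-- The exponent vector of `x₀ / α₂` in terms of `η`. -/
def expX0 : Fin 8 → ℕ := ![3, 6, 9, 7, 5, 3, 5, 1]

lemma EdgeSupported.eq_formula {e : Fin 8 → ℕ} {f : ℕ} (h : EdgeSupported e f) {a b d : ℕ}
    (ha : ∑ i, expX1 i * e i = a) (hb : ∑ i, expGcd i * e i = b)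
    (hd : ∑ i, expX0 i * e i + f = d) :
    2 * e 0 = 4 * b - 3 * a ∧ e 1 = min (a - b) (3 * b - 2 * a) ∧
      e 3 = min (2 * a - 3 * b) (2 * b - a) ∧ 2 * e 4 = min (3 * a - 5 * b) (3 * b - a) ∧
      e 5 = min (a - 2 * b) b ∧
      e 6 = (if 3 * b = 2 * a then min (2 * d - 3 * a) (a / 3) else 0) ∧
      2 * e 7 = a - 3 * b := by
  simp [Fin.sum_univ_eight, expX1, expGcd, expX0] at ha hb hd
  unfold EdgeSupported at h
  generalize e 0 = e0, e 1 = e1, e 2 = e2, e 3 = e3, e 4 = e4, e 5 = e5, e 6 = e6,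
    e 7 = e7 at *
  rcases h with h | h | h | h | h | h | h | h <;>
    obtain ⟨h1, h2, h3, h4, h5, h6, h7⟩ := h <;> subst h1 h2 h3 h4 h5 h6 h7 <;>
    refine ⟨?_, ?_, ?_, ?_, ?_, ?_, ?_⟩ <;> first | omega | (split_ifs <;> omega)

lemma EdgeSupported.unique {e e' : Fin 8 → ℕ} {f f' : ℕ} (h : EdgeSupported e f)
    (h' : EdgeSupported e' f') (ha : ∑ i, expX1 i * e i = ∑ i, expX1 i * e' i)
    (hb : ∑ i, expGcd i * e i = ∑ i, expGcd i * e' i)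
    (hd : ∑ i, expX0 i * e i + f = ∑ i, expX0 i * e' i + f') : e = e' := by
  obtain ⟨h0, h1, h3, h4, h5, h6, h7⟩ := h.eq_formula ha hb hd
  obtain ⟨h0', h1', h3', h4', h5', h6', h7'⟩ := h'.eq_formula rfl rfl rfl
  rw [← h0'] at h0
  rw [← h1'] at h1
  rw [← h3'] at h3
  rw [← h4'] at h4
  rw [← h5'] at h5
  rw [← h6'] at h6
  rw [← h7'] at h7
  simp [Fin.sum_univ_eight, expX1] at ha
  have h2 : e 2 = e' 2 := by omega
  funext i
  fin_cases i <;> simp <;> omega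

lemma exists_edgeSupported {a b d : ℕ} (hba : b ≤ a)
    (h : (2 * a < 3 * b ∧ 2 * d = 3 * a) ∨ (3 * b < 2 * a ∧ 2 * d = a + 3 * b) ∨
      (3 * b = 2 * a ∧ 3 * a ≤ 2 * d)) :
    ∃ (e : Fin 8 → ℕ) (f : ℕ), EdgeSupported e f ∧ ∑ i, expX1 i * e i = a ∧
      ∑ i, expGcd i * e i = b ∧ ∑ i, expX0 i * e i + f = d := by
  simp only [Fin.sum_univ_eight, EdgeSupported]
  rcases h with h | h | h
  · by_cases h1 : 3 * a ≤ 4 * b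
    · refine ⟨![(4 * b - 3 * a) / 2, a - b, 0, 0, 0, 0, 0, 0], 0, ?_⟩
      simp [expX1, expGcd, expX0]; omega
    · refine ⟨![0, 3 * b - 2 * a, (3 * a - 4 * b) / 2, 0, 0, 0, 0, 0], 0, ?_⟩
      simp [expX1, expGcd, expX0]; omega
  · by_cases h1 : 3 * a ≤ 5 * b
    · refine ⟨![0, 0, (5 * b - 3 * a) / 2, 2 * a - 3 * b, 0, 0, 0, 0], 0, ?_⟩
      simp [expX1, expGcd, expX0]; omega
    by_cases h2 : a ≤ 2 * b
    · refine ⟨![0, 0, 0, 2 * b - a, (3 * a - 5 * b) / 2, 0, 0, 0], 0, ?_⟩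
      simp [expX1, expGcd, expX0]; omega
    by_cases h3 : a ≤ 3 * b
    · refine ⟨![0, 0, 0, 0, (3 * b - a) / 2, a - 2 * b, 0, 0], 0, ?_⟩
      simp [expX1, expGcd, expX0]; omega
    · refine ⟨![0, 0, 0, 0, 0, b, 0, (a - 3 * b) / 2], 0, ?_⟩
      simp [expX1, expGcd, expX0]; omega
  · by_cases h1 : 5 * a ≤ 3 * d
    · refine ⟨![0, 0, 0, 0, 0, 0, a / 3, 0], d - 5 * (a / 3), ?_⟩
      simp [expX1, expGcd, expX0]; omega
    · refine ⟨![0, 0, 5 * (a / 3) - d, 0, 0, 0, 2 * d - 3 * a, 0], 0, ?_⟩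
      simp [expX1, expGcd, expX0]; omega

lemma two_mul_padicValInt_eq {p : ℕ} (hp : p.Prime) {x s : ℤ} {n : ℕ} (hx : x ≠ 0)
    (h : x ^ 2 = (p : ℤ) ^ n * s) : 2 * padicValInt p x = n + padicValInt p s := by
  have := Fact.mk hp
  have hp0 : (p : ℤ) ≠ 0 := by exact_mod_cast hp.ne_zero
  have hs : s ≠ 0 := by
    rintro rfl
    exact pow_ne_zero 2 hx (by simpa using h)
  have h2 := congrArg (padicValInt p) h
  rwa [padicValInt_pow hp, padicValInt.mul (pow_ne_zero _ hp0) hs, padicValInt_pow hp,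
    padicValInt.self hp.one_lt, mul_one] at h2

/-- The tropical constraints on the exponents of a prime in `x₁`, `gcd(x₁, x₂)` and `x₀`. -/
lemma padicValInt_of_surface {x₀ x₁ x₂ x₃ : ℤ} (h : x₀ ^ 2 = x₁ * x₂ ^ 3 + x₁ ^ 3 * x₃)
    (h0 : x₀ ≠ 0) (h1 : x₁ ≠ 0) (hg : Int.gcd x₁ (Int.gcd x₂ x₃) = 1) {p : ℕ} (hp : p.Prime)
    {a b d : ℕ} (ha : padicValInt p x₁ = a) (hb : padicValInt p (Int.gcd x₁ x₂) = b)
    (hd : padicValInt p x₀ = d) :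
    b ≤ a ∧ ((2 * a < 3 * b ∧ 2 * d = 3 * a) ∨ (3 * b < 2 * a ∧ 2 * d = a + 3 * b) ∨
      (3 * b = 2 * a ∧ 3 * a ≤ 2 * d)) := by
  have := Fact.mk hp
  have hpi : Prime (p : ℤ) := Nat.prime_iff_prime_int.mp hp
  have hG : (Int.gcd x₁ x₂ : ℤ) ≠ 0 := by
    simp [Int.gcd_eq_zero_iff, h1]
  have dvd_gcd : ∀ n : ℕ, (p : ℤ) ^ n ∣ Int.gcd x₁ x₂ ↔ n ≤ b := by
    intro n
    rw [padicValInt_dvd_iff, hb]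
    exact or_iff_right hG
  have dvd_x1 : ∀ n : ℕ, (p : ℤ) ^ n ∣ x₁ ↔ n ≤ a := by
    intro n
    rw [padicValInt_dvd_iff, ha]
    exact or_iff_right h1
  have hba : b ≤ a :=
    (dvd_x1 b).mp (((dvd_gcd b).mpr le_rfl).trans (Int.gcd_dvd_left _ _))
  obtain ⟨u, hu⟩ := (dvd_x1 a).mpr le_rfl
  obtain ⟨w, hw⟩ := ((dvd_gcd b).mpr le_rfl).trans (Int.gcd_dvd_right x₁ x₂)
  have hpu : ¬ (p : ℤ) ∣ u := by
    rintro ⟨t, ht⟩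
    have := (dvd_x1 (a + 1)).mp ⟨t, by rw [hu, ht]; ring⟩
    omega
  have hpw : b < a → ¬ (p : ℤ) ∣ w := by
    rintro hlt ⟨t, ht⟩
    have := (dvd_gcd (b + 1)).mp (Int.dvd_coe_gcd ((dvd_x1 _).mpr hlt) ⟨t, by rw [hw, ht]; ring⟩)
    omega
  have hx3 : 0 < b → ¬ (p : ℤ) ∣ x₃ := by
    intro hb0 h3
    have hpG : (p : ℤ) ∣ Int.gcd x₁ x₂ := by simpa using (dvd_gcd 1).mpr hb0
    exact Int.not_dvd_of_gcd_eq_one hg hp (hpG.trans (Int.gcd_dvd_left _ _))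
      (Int.dvd_coe_gcd (hpG.trans (Int.gcd_dvd_right _ _)) h3)
  refine ⟨hba, ?_⟩
  rcases lt_trichotomy (2 * a) (3 * b) with hlt | heq | hgt
  · obtain ⟨k, hk⟩ := Nat.exists_eq_add_of_lt hlt
    have e1 : x₀ ^ 2 = (p : ℤ) ^ (3 * a) * (u * ((p : ℤ) * (p ^ k * w ^ 3) + u ^ 2 * x₃)) := by
      have : ((p : ℤ) ^ b) ^ 3 = (p ^ a) ^ 2 * (p ^ k * p) := by
        rw [← pow_mul, ← pow_mul, ← pow_succ, ← pow_add]; congr 1; omega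
      rw [h, hw, hu, mul_pow _ w 3, this]; ring
    have hnd : ¬ (p : ℤ) ∣ u * ((p : ℤ) * (p ^ k * w ^ 3) + u ^ 2 * x₃) := by
      rw [hpi.dvd_mul, dvd_add_right (dvd_mul_right _ _), hpi.dvd_mul]
      have := hx3 (by omega)
      have := mt (hpi.dvd_of_dvd_pow (a := u) (n := 2)) hpu
      tauto
    have := two_mul_padicValInt_eq hp h0 e1
    rw [padicValInt.eq_zero_of_not_dvd hnd] at this
    omega
  · have e1 : x₀ ^ 2 = (p : ℤ) ^ (3 * a) * (u * (w ^ 3 + u ^ 2 * x₃)) := by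
      have : ((p : ℤ) ^ b) ^ 3 = (p ^ a) ^ 2 := by
        rw [← pow_mul, ← pow_mul]; congr 1; omega
      rw [h, hw, hu, mul_pow _ w 3, this]; ring
    have := two_mul_padicValInt_eq hp h0 e1
    omega
  · obtain ⟨k, hk⟩ := Nat.exists_eq_add_of_lt hgt
    have e1 : x₀ ^ 2 =
        (p : ℤ) ^ (a + 3 * b) * (u * (w ^ 3 + (p : ℤ) * (p ^ k * (u ^ 2 * x₃)))) := by
      have : ((p : ℤ) ^ a) ^ 3 = p ^ a * (p ^ b) ^ 3 * (p ^ k * p) := by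
        rw [← pow_mul, ← pow_mul, ← pow_succ, ← pow_add, ← pow_add]; congr 1; omega
      rw [h, hw, hu, mul_pow _ u 3, this]; ring
    have hnd : ¬ (p : ℤ) ∣ u * (w ^ 3 + (p : ℤ) * (p ^ k * (u ^ 2 * x₃))) := by
      rw [hpi.dvd_mul, dvd_add_left (dvd_mul_right _ _)]
      have := mt (hpi.dvd_of_dvd_pow (a := w) (n := 3)) (hpw (by omega))
      tauto
    have := two_mul_padicValInt_eq hp h0 e1
    rw [padicValInt.eq_zero_of_not_dvd hnd] at this
    omega

/-- The coprimality conditions on the universal torsor. -/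
structure TorsorCoprime (η : Fin 8 → ℤ) (α₁ α₂ α₃ : ℤ) : Prop where
  alpha₁ : Int.gcd α₁ (η 1 * η 2 * η 3 * η 4 * η 5 * η 6 * η 7) = 1
  alpha₂ : Int.gcd α₂ (η 0 * η 1 * η 2 * η 3 * η 4 * η 5 * η 7) = 1
  alpha₃ : Int.gcd α₃ (η 0 * η 1 * η 2 * η 3 * η 4 * η 5 * η 6) = 1
  eta₇ : Int.gcd (η 7) (η 0 * η 1 * η 2 * η 3 * η 4 * η 6) = 1
  eta₆ : Int.gcd (η 6) (η 0 * η 1 * η 3 * η 4 * η 5) = 1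
  eta₅ : Int.gcd (η 5) (η 0 * η 1 * η 2 * η 3) = 1
  eta₄ : Int.gcd (η 4) (η 0 * η 1 * η 2) = 1
  eta₃ : Int.gcd (η 3) (η 0 * η 1) = 1
  eta₂ : Int.gcd (η 2) (η 0) = 1

section Torsor

variable {η : Fin 8 → ℤ} {α₁ α₂ α₃ : ℤ}

lemma TorsorCoprime.edgeSupported (h : TorsorCoprime η α₁ α₂ α₃) (hη : ∀ i, 1 ≤ η i)
    (hα : 1 ≤ α₂) {p : ℕ} (hp : p.Prime) :
    EdgeSupported (fun i => padicValInt p (η i)) (padicValInt p α₂) := by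
  have hpi : Prime (p : ℤ) := Nat.prime_iff_prime_int.mp hp
  have hz : ∀ i, padicValInt p (η i) = 0 ↔ ¬ (p : ℤ) ∣ η i := fun i => by
    have := hη i
    rw [← padicValInt_ne_zero_iff_dvd hp (by omega), not_not]
  have hzα : padicValInt p α₂ = 0 ↔ ¬ (p : ℤ) ∣ α₂ := by
    rw [← padicValInt_ne_zero_iff_dvd hp (by omega), not_not]
  have c2 := Int.not_dvd_of_gcd_eq_one h.alpha₂ hp
  have d7 := Int.not_dvd_of_gcd_eq_one h.eta₇ hp
  have d6 := Int.not_dvd_of_gcd_eq_one h.eta₆ hp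
  have d5 := Int.not_dvd_of_gcd_eq_one h.eta₅ hp
  have d4 := Int.not_dvd_of_gcd_eq_one h.eta₄ hp
  have d3 := Int.not_dvd_of_gcd_eq_one h.eta₃ hp
  have d2 := Int.not_dvd_of_gcd_eq_one h.eta₂ hp
  simp only [hpi.dvd_mul, not_or] at c2 d7 d6 d5 d4 d3 d2
  simp only [EdgeSupported, hz, hzα]
  by_cases q7 : (p : ℤ) ∣ η 7
  · simp only [q7, true_implies] at d7
    simp_all
  by_cases q6 : (p : ℤ) ∣ η 6
  · simp only [q6, true_implies] at d6
    by_cases q2 : (p : ℤ) ∣ η 2 <;> simp_all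
  by_cases q5 : (p : ℤ) ∣ η 5
  · simp only [q5, true_implies] at d5
    simp_all
  by_cases q4 : (p : ℤ) ∣ η 4
  · simp only [q4, true_implies] at d4
    simp_all
  by_cases q3 : (p : ℤ) ∣ η 3
  · simp only [q3, true_implies] at d3
    simp_all
  by_cases q2 : (p : ℤ) ∣ η 2 <;> by_cases q1 : (p : ℤ) ∣ η 1 <;>
    by_cases q0 : (p : ℤ) ∣ η 0 <;> simp_all

lemma prod_pow_expX1 : ∏ i, η i ^ expX1 i =
    η 0 ^ 2 * η 1 ^ 4 * η 2 ^ 6 * η 3 ^ 5 * η 4 ^ 4 * η 5 ^ 3 * η 6 ^ 3 * η 7 ^ 2 := by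
  simp [Fin.prod_univ_eight, expX1]

lemma prod_pow_expGcd : ∏ i, η i ^ expGcd i =
    η 0 ^ 2 * η 1 ^ 3 * η 2 ^ 4 * η 3 ^ 3 * η 4 ^ 2 * η 5 * η 6 ^ 2 := by
  simp [Fin.prod_univ_eight, expGcd]

lemma prod_pow_expX0 : ∏ i, η i ^ expX0 i =
    η 0 ^ 3 * η 1 ^ 6 * η 2 ^ 9 * η 3 ^ 7 * η 4 ^ 5 * η 5 ^ 3 * η 6 ^ 5 * η 7 := by
  simp [Fin.prod_univ_eight, expX0]

lemma one_le_prod_pow (hη : ∀ i, 1 ≤ η i) (c : Fin 8 → ℕ) : 1 ≤ ∏ i, η i ^ c i := by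
  have : 0 < ∏ i, η i ^ c i := Finset.prod_pos fun i _ => pow_pos (by linarith [hη i]) _
  omega

lemma prod_pow_expX1_eq : ∏ i, η i ^ expX1 i = (∏ i, η i ^ expGcd i) *
    (η 1 * η 2 ^ 2 * η 3 ^ 2 * η 4 ^ 2 * η 5 ^ 2 * η 6 * η 7 ^ 2) := by
  rw [prod_pow_expX1, prod_pow_expGcd]; ring

lemma TorsorCoprime.gcd_eq (h : TorsorCoprime η α₁ α₂ α₃) (hη : ∀ i, 1 ≤ η i) :
    (Int.gcd (∏ i, η i ^ expX1 i) (-((∏ i, η i ^ expGcd i) * α₁)) : ℤ) =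
      ∏ i, η i ^ expGcd i := by
  have hG := one_le_prod_pow hη expGcd
  have h1 : Int.gcd (η 1 * η 2 ^ 2 * η 3 ^ 2 * η 4 ^ 2 * η 5 ^ 2 * η 6 * η 7 ^ 2) α₁ = 1 := by
    refine Int.gcd_eq_one_of_forall_prime fun p hp hd hα => ?_
    have hpi : Prime (p : ℤ) := Nat.prime_iff_prime_int.mp hp
    have c1 := Int.not_dvd_of_gcd_eq_one h.alpha₁ hp hα
    simp only [hpi.dvd_mul, hpi.dvd_pow_iff_dvd two_ne_zero] at hd c1
    tauto
  rw [prod_pow_expX1_eq, Int.gcd_neg, Int.gcd_mul_left, h1]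
  simp only [mul_one, Int.natCast_natAbs]
  exact abs_of_pos (by omega)

lemma TorsorCoprime.gcd_eq_one (h : TorsorCoprime η α₁ α₂ α₃) :
    Int.gcd (∏ i, η i ^ expX1 i) (Int.gcd (-((∏ i, η i ^ expGcd i) * α₁)) (-α₃)) = 1 := by
  refine Int.gcd_eq_one_of_forall_prime fun p hp hd hd' => ?_
  have hpi : Prime (p : ℤ) := Nat.prime_iff_prime_int.mp hp
  have h2 := (dvd_neg.mp (hd'.trans (Int.gcd_dvd_left _ _)))
  have c1 := Int.not_dvd_of_gcd_eq_one h.alpha₁ hp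
  have c3 := Int.not_dvd_of_gcd_eq_one h.alpha₃ hp (dvd_neg.mp (hd'.trans (Int.gcd_dvd_right _ _)))
  rw [prod_pow_expX1] at hd
  rw [prod_pow_expGcd] at h2
  have pw : ∀ {n : ℕ} {z : ℤ}, (p : ℤ) ∣ z ^ n → (p : ℤ) ∣ z := hpi.dvd_of_dvd_pow
  simp only [hpi.dvd_mul, not_or] at c1 c3 hd h2
  obtain ⟨⟨⟨⟨⟨⟨n0, n1⟩, n2⟩, n3⟩, n4⟩, n5⟩, n6⟩ := c3
  have n0' := fun n => mt (pw (n := n)) n0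
  have n1' := fun n => mt (pw (n := n)) n1
  have n2' := fun n => mt (pw (n := n)) n2
  have n3' := fun n => mt (pw (n := n)) n3
  have n4' := fun n => mt (pw (n := n)) n4
  have n5' := fun n => mt (pw (n := n)) n5
  have n6' := fun n => mt (pw (n := n)) n6
  simp only [n0', n1', n2', n3', n4', n5', n6', n5, false_or] at hd h2
  exact (c1 h2).2 (pw hd)

lemma surface_eq_iff_torsor_eq (hη : ∀ i, 1 ≤ η i) :
    ((∏ i, η i ^ expX0 i) * α₂) ^ 2 =
        (∏ i, η i ^ expX1 i) * (-((∏ i, η i ^ expGcd i) * α₁)) ^ 3 +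
          (∏ i, η i ^ expX1 i) ^ 3 * (-α₃) ↔
      η 0 ^ 2 * η 1 * α₁ ^ 3 + η 6 * α₂ ^ 2 + η 3 * η 4 ^ 2 * η 5 ^ 3 * η 7 ^ 4 * α₃ = 0 := by
  have hc := one_le_prod_pow hη ![6, 12, 18, 14, 10, 6, 9, 2]
  have key : ((∏ i, η i ^ expX0 i) * α₂) ^ 2 -
      ((∏ i, η i ^ expX1 i) * (-((∏ i, η i ^ expGcd i) * α₁)) ^ 3 +
          (∏ i, η i ^ expX1 i) ^ 3 * (-α₃)) =
      (∏ i, η i ^ ![6, 12, 18, 14, 10, 6, 9, 2] i) * (η 0 ^ 2 * η 1 * α₁ ^ 3 + η 6 * α₂ ^ 2 +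
        η 3 * η 4 ^ 2 * η 5 ^ 3 * η 7 ^ 4 * α₃) := by
    rw [prod_pow_expX0, prod_pow_expX1, prod_pow_expGcd]
    simp [Fin.prod_univ_eight]
    ring
  rw [← sub_eq_zero, key, mul_eq_zero]
  exact or_iff_right (by omega)

lemma padicValInt_prod_expX0_mul (hη : ∀ i, 1 ≤ η i) (hα : 1 ≤ α₂) {p : ℕ} (hp : p.Prime) :
    padicValInt p ((∏ i, η i ^ expX0 i) * α₂) =
      ∑ i, expX0 i * padicValInt p (η i) + padicValInt p α₂ := by
  have := Fact.mk hp
  have := one_le_prod_pow hη expX0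
  rw [padicValInt.mul (by omega) (by omega),
    padicValInt_prod_pow hp _ _ _ fun i => by have := hη i; omega]

end Torsor

lemma torsor_unique {η η' : Fin 8 → ℤ} {α₁ α₂ α₃ α₁' α₂' α₃' : ℤ} (h : TorsorCoprime η α₁ α₂ α₃)
    (h' : TorsorCoprime η' α₁' α₂' α₃') (hη : ∀ i, 1 ≤ η i) (hη' : ∀ i, 1 ≤ η' i) (hα : 1 ≤ α₂)
    (hα' : 1 ≤ α₂') (h0 : (∏ i, η i ^ expX0 i) * α₂ = (∏ i, η' i ^ expX0 i) * α₂')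
    (h1 : ∏ i, η i ^ expX1 i = ∏ i, η' i ^ expX1 i)
    (h2 : (∏ i, η i ^ expGcd i) * α₁ = (∏ i, η' i ^ expGcd i) * α₁') :
    η = η' ∧ α₁ = α₁' ∧ α₂ = α₂' := by
  have hG : ∏ i, η i ^ expGcd i = ∏ i, η' i ^ expGcd i := by
    rw [← h.gcd_eq hη, ← h'.gcd_eq hη', h1, h2]
  have hne : ∀ i, η i ≠ 0 := fun i => by have := hη i; omega
  have hne' : ∀ i, η' i ≠ 0 := fun i => by have := hη' i; omega
  have hηη : η = η' := by
    have hv : ∀ p : ℕ, p.Prime →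
        (fun i => padicValInt p (η i)) = fun i => padicValInt p (η' i) := by
      intro p hp
      refine (h.edgeSupported hη hα hp).unique (h'.edgeSupported hη' hα' hp) ?_ ?_ ?_
      · rw [← padicValInt_prod_pow hp _ _ _ hne, h1, padicValInt_prod_pow hp _ _ _ hne']
      · rw [← padicValInt_prod_pow hp _ _ _ hne, hG, padicValInt_prod_pow hp _ _ _ hne']
      · rw [← padicValInt_prod_expX0_mul hη hα hp, h0, padicValInt_prod_expX0_mul hη' hα' hp]
    funext i
    exact Int.eq_of_forall_padicValInt_eq (hη i) (hη' i) fun p hp => congrFun (hv p hp) i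
  subst hηη
  have g0 := one_le_prod_pow hη expX0
  have gG := one_le_prod_pow hη expGcd
  exact ⟨rfl, mul_left_cancel₀ (by omega) h2, mul_left_cancel₀ (by omega) h0⟩

lemma exists_torsor {x₀ x₁ x₂ x₃ : ℤ} (h : x₀ ^ 2 = x₁ * x₂ ^ 3 + x₁ ^ 3 * x₃)
    (h0 : 1 ≤ x₀) (h1 : 1 ≤ x₁) (hg : Int.gcd x₁ (Int.gcd x₂ x₃) = 1) :
    ∃ (η : Fin 8 → ℤ) (α₁ α₂ : ℤ), (∀ i, 1 ≤ η i) ∧ 1 ≤ α₂ ∧ TorsorCoprime η α₁ α₂ (-x₃) ∧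
      (∏ i, η i ^ expX0 i) * α₂ = x₀ ∧ ∏ i, η i ^ expX1 i = x₁ ∧
      -((∏ i, η i ^ expGcd i) * α₁) = x₂ := by
  have hG : 1 ≤ (Int.gcd x₁ x₂ : ℤ) := by
    have := Int.gcd_pos_of_ne_zero_left x₂ (show x₁ ≠ 0 by omega)
    omega
  have hloc : ∀ p : ℕ, ∃ (e : Fin 8 → ℕ) (f : ℕ), p.Prime → EdgeSupported e f ∧
      ∑ i, expX1 i * e i = padicValInt p x₁ ∧
      ∑ i, expGcd i * e i = padicValInt p (Int.gcd x₁ x₂) ∧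
      ∑ i, expX0 i * e i + f = padicValInt p x₀ := by
    intro p
    by_cases hp : p.Prime
    · obtain ⟨hba, ht⟩ := padicValInt_of_surface h (by omega) (by omega) hg hp rfl rfl rfl
      obtain ⟨e, f, hef⟩ := exists_edgeSupported hba ht
      exact ⟨e, f, fun _ => hef⟩
    · exact ⟨0, 0, fun hp' => absurd hp' hp⟩
  choose e f hef using hloc
  have hηex : ∀ i, ∃ m : ℤ, 1 ≤ m ∧ ∀ p : ℕ, p.Prime → padicValInt p m = e p i := by
    intro i
    refine Int.exists_padicValInt_eq (n := x₁) (by omega) (fun p => e p i) fun p hp => ?_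
    rw [← (hef p hp).2.1]
    have hpos : 1 ≤ expX1 i := by fin_cases i <;> simp [expX1]
    calc e p i ≤ expX1 i * e p i := Nat.le_mul_of_pos_left _ hpos
      _ ≤ _ := Finset.single_le_sum (f := fun j => expX1 j * e p j) (fun _ _ => Nat.zero_le _)
        (Finset.mem_univ i)
  choose η hη hv using hηex
  have hne : ∀ i, η i ≠ 0 := fun i => by have := hη i; omega
  have hval : ∀ (c : Fin 8 → ℕ) (p : ℕ), p.Prime →
      padicValInt p (∏ i, η i ^ c i) = ∑ i, c i * e p i := by
    intro c p hp
    rw [padicValInt_prod_pow hp _ _ _ hne]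
    simp only [fun i => hv i p hp]
  have hX1 : ∏ i, η i ^ expX1 i = x₁ :=
    Int.eq_of_forall_padicValInt_eq (one_le_prod_pow hη _) h1 fun p hp => by
      rw [hval _ p hp, (hef p hp).2.1]
  have hGc : ∏ i, η i ^ expGcd i = Int.gcd x₁ x₂ :=
    Int.eq_of_forall_padicValInt_eq (one_le_prod_pow hη _) hG fun p hp => by
      rw [hval _ p hp, (hef p hp).2.2.1]
  have g0 := one_le_prod_pow hη expX0
  obtain ⟨α₂, hα₂⟩ : ∏ i, η i ^ expX0 i ∣ x₀ :=
    Int.dvd_of_forall_padicValInt_le (by omega) (by omega) fun p hp => by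
      rw [hval _ p hp, ← (hef p hp).2.2.2]; omega
  have hα₂1 : 1 ≤ α₂ := by
    have : 0 < α₂ := pos_of_mul_pos_right (by omega : 0 < (∏ i, η i ^ expX0 i) * α₂) (by omega)
    omega
  obtain ⟨β, hβ⟩ : ∏ i, η i ^ expGcd i ∣ x₂ := hGc ▸ Int.gcd_dvd_right x₁ x₂
  have hedge : ∀ p : ℕ, p.Prime →
      EdgeSupported (fun i => padicValInt p (η i)) (padicValInt p α₂) := by
    intro p hp
    have h4 := padicValInt_prod_expX0_mul hη hα₂1 hp
    obtain ⟨hE, -, -, h3⟩ := hef p hp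
    rw [← hα₂, ← h3] at h4
    simp only [fun i => hv i p hp] at h4 ⊢
    rwa [← Nat.add_left_cancel h4]
  have hyβ : Int.gcd (η 1 * η 2 ^ 2 * η 3 ^ 2 * η 4 ^ 2 * η 5 ^ 2 * η 6 * η 7 ^ 2) β = 1 := by
    have h5 : Int.gcd (∏ i, η i ^ expX1 i) ((∏ i, η i ^ expGcd i) * β) = Int.gcd x₁ x₂ := by
      rw [hX1, hβ]
    rw [prod_pow_expX1_eq, Int.gcd_mul_left, hGc, Int.natAbs_natCast] at h5
    exact Nat.eq_of_mul_eq_mul_left (by omega) (h5.trans (mul_one _).symm)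
  have hx3 : ∀ p : ℕ, p.Prime → (p : ℤ) ∣ -x₃ → ¬ (p : ℤ) ∣ ∏ i, η i ^ expGcd i := by
    intro p hp h3 hd
    rw [hGc] at hd
    exact Int.not_dvd_of_gcd_eq_one hg hp (hd.trans (Int.gcd_dvd_left _ _))
      (Int.dvd_coe_gcd (hd.trans (Int.gcd_dvd_right _ _)) (dvd_neg.mp h3))
  refine ⟨η, -β, α₂, hη, hα₂1, ?_, hα₂.symm, hX1, by rw [hβ]; ring⟩
  have hz : ∀ (p : ℕ), p.Prime → ∀ i, padicValInt p (η i) = 0 ↔ ¬ (p : ℤ) ∣ η i :=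
    fun p hp i => by rw [← padicValInt_ne_zero_iff_dvd hp (hne i), not_not]
  have hzα : ∀ (p : ℕ), p.Prime → (padicValInt p α₂ = 0 ↔ ¬ (p : ℤ) ∣ α₂) :=
    fun p hp => by rw [← padicValInt_ne_zero_iff_dvd hp (by omega), not_not]
  constructor
  · refine Int.gcd_eq_one_of_forall_prime fun p hp hα hd => ?_
    have hpi : Prime (p : ℤ) := Nat.prime_iff_prime_int.mp hp
    have c := fun h6 => Int.not_dvd_of_gcd_eq_one hyβ hp h6 (dvd_neg.mp hα)
    simp only [hpi.dvd_mul, hpi.dvd_pow_iff_dvd two_ne_zero] at hd c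
    tauto
  · refine Int.gcd_eq_one_of_forall_prime fun p hp hα hd => ?_
    have hpi : Prime (p : ℤ) := Nat.prime_iff_prime_int.mp hp
    have hE := hedge p hp
    simp only [EdgeSupported, hz p hp, hzα p hp, hpi.dvd_mul] at hE hd
    tauto
  · refine Int.gcd_eq_one_of_forall_prime fun p hp hα hd => ?_
    have hpi : Prime (p : ℤ) := Nat.prime_iff_prime_int.mp hp
    have c := hx3 p hp hα
    rw [prod_pow_expGcd] at c
    simp only [hpi.dvd_mul, hpi.dvd_pow_iff_dvd two_ne_zero, hpi.dvd_pow_iff_dvd three_ne_zero,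
      hpi.dvd_pow_iff_dvd four_ne_zero] at hd c
    tauto
  all_goals
    refine Int.gcd_eq_one_of_forall_prime fun p hp hα hd => ?_
    have hpi : Prime (p : ℤ) := Nat.prime_iff_prime_int.mp hp
    have hE := hedge p hp
    simp only [EdgeSupported, hz p hp, hzα p hp, hpi.dvd_mul] at hE hd
    tauto

set_option maxHeartbeats 2000000 in
theorem Ntors_eq_Naff (B : ℝ) : Ntors B = Naff B := by
  unfold Ntors Naff
  refine Nat.card_eq_of_bijective (fun v => ⟨((∏ i, v.1.1 i ^ expX0 i) * v.1.2.2.1,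
    ∏ i, v.1.1 i ^ expX1 i, -((∏ i, v.1.1 i ^ expGcd i) * v.1.2.1), -v.1.2.2.2), ?_⟩) ⟨?_, ?_⟩
  · obtain ⟨⟨η, α₁, α₂, α₃⟩, heq, hη, hα, b1, b2, b3, b0, c1, c2, c3, d7, d6, d5, d4, d3, d2⟩ := v
    dsimp only at *
    have hc : TorsorCoprime η α₁ α₂ α₃ := ⟨c1, c2, c3, d7, d6, d5, d4, d3, d2⟩
    refine ⟨(surface_eq_iff_torsor_eq hη).mpr heq, ?_, one_le_prod_pow hη _, hc.gcd_eq_one,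
      ?_, ?_, ?_, ?_⟩
    · exact one_le_mul_of_one_le_of_one_le (one_le_prod_pow hη _) hα
    · rwa [prod_pow_expX1]
    · rwa [prod_pow_expGcd, Int.cast_neg, abs_neg]
    · rwa [Int.cast_neg, abs_neg]
    · rwa [prod_pow_expX0]
  · rintro ⟨⟨η, α₁, α₂, α₃⟩, heq, hη, hα, _, _, _, _, c1, c2, c3, d7, d6, d5, d4, d3, d2⟩
      ⟨⟨η', α₁', α₂', α₃'⟩, heq', hη', hα', _, _, _, _, c1', c2', c3', d7', d6', d5', d4', d3', d2'⟩
      hvw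
    have hv := congrArg Subtype.val hvw
    dsimp only at hv hη hα hη' hα' c1 c2 c3 d7 d6 d5 d4 d3 d2 c1' c2' c3' d7' d6' d5' d4' d3' d2'
    obtain ⟨h0, h⟩ := Prod.mk.inj hv
    obtain ⟨h1, h⟩ := Prod.mk.inj h
    obtain ⟨h2, h3⟩ := Prod.mk.inj h
    have hc : TorsorCoprime η α₁ α₂ α₃ := ⟨c1, c2, c3, d7, d6, d5, d4, d3, d2⟩
    have hc' : TorsorCoprime η' α₁' α₂' α₃' := ⟨c1', c2', c3', d7', d6', d5', d4', d3', d2'⟩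
    obtain ⟨e, e1, e2⟩ := torsor_unique hc hc' hη hη' hα hα' h0 h1 (neg_inj.mp h2)
    subst e e1 e2
    obtain rfl := neg_inj.mp h3
    rfl
  · rintro ⟨⟨x₀, x₁, x₂, x₃⟩, heq, h0, h1, hg, b1, b2, b3, b0⟩
    dsimp only at *
    have hex := exists_torsor heq h0 h1 hg
    obtain ⟨η, α₁, α₂, hη, hα, hc, e0, e1, e2⟩ := hex
    refine ⟨⟨(η, α₁, α₂, -x₃), ?_, hη, hα, ?_, ?_, ?_, ?_, hc.alpha₁, hc.alpha₂, hc.alpha₃,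
      hc.eta₇, hc.eta₆, hc.eta₅, hc.eta₄, hc.eta₃, hc.eta₂⟩, ?_⟩
    · exact (surface_eq_iff_torsor_eq hη).mp (by rw [neg_neg, e0, e1, e2]; exact heq)
    · rwa [← e1, prod_pow_expX1] at b1
    · rwa [← e2, prod_pow_expGcd, Int.cast_neg, abs_neg] at b2
    · rwa [Int.cast_neg, abs_neg]
    · rwa [← e0, prod_pow_expX0] at b0
    · simp only [e0, e1, e2, neg_neg]

theorem stmt19 :
    ∃ C B₀ : ℝ, ∀ B : ℝ, B₀ ≤ B →
      |(Naff B : ℝ) - (Ntors B : ℝ)| ≤ C * B ^ ((2 : ℝ)/3) :=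
  ⟨0, 0, fun B _ => by simp [Ntors_eq_Naff]⟩
end
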